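/- arXiv:1809.03049 — 2 statements merged into one kernel-verified Lean document; each statement's English description precedes it below -/
import Mathlib

section
/- For every rational number q ≥ 1, there exists a finite connected simple graph G such that z(G) / c(G) = q, i.e., z(G) = q · c(G). -/
open SimpleGraph

/-! ### Pursuit games on graphs

A round of the game is recorded as a pair `(c, r)` where `c : Fin k → V` is the
configuration of the `k` pursuers (cops or zombies) and `r : V` the position of the
evader (robber or survivor).  In a round the pursuers move first (knowing the full
history), then the evader moves (knowing the full history and the pursuers' new
configuration).  Strategies are functions of the full history, so no generality is lost. -/

/-- The history of a play: the list of (pursuer configuration, evader position) pairs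
for the completed rounds so far. -/
abbrev GameHist (V : Type*) (k : ℕ) := List ((Fin k → V) × V)

/-- The history determined by the sequences `c` (pursuer configurations) and `r`
(evader positions), recording rounds `0, …, n-1`. -/
def histUpTo {V : Type*} {k : ℕ} (c : ℕ → Fin k → V) (r : ℕ → V) (n : ℕ) : GameHist V k :=
  (List.range n).map fun i => (c i, r i)

/-- The robber/survivor always moves along an edge or stays still. -/
def RobberLegal {V : Type*} (G : SimpleGraph V) (r : ℕ → V) : Prop :=
  ∀ n, r (n+1) = r n ∨ G.Adj (r n) (r (n+1))

/-- At step `n`, each cop stays still or moves along an edge. -/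
def CopStepLegal {V : Type*} (G : SimpleGraph V) {k : ℕ} (c : ℕ → Fin k → V) (n : ℕ) : Prop :=
  ∀ i, c (n+1) i = c n i ∨ G.Adj (c n i) (c (n+1) i)

/-- At step `n`, each zombie moves along an edge to a vertex strictly closer to the
survivor's current position `r n`. -/
def ZombieStepLegal {V : Type*} (G : SimpleGraph V) {k : ℕ} (c : ℕ → Fin k → V) (r : ℕ → V)
    (n : ℕ) : Prop :=
  ∀ i, G.Adj (c n i) (c (n+1) i) ∧ G.dist (c (n+1) i) (r n) < G.dist (c n i) (r n)

/-- The pursuers follow the history-dependent strategy `mv`: their configuration at time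
`n+1` is the strategy applied to the history of rounds `0, …, n`. -/
def FollowsStrat {V : Type*} {k : ℕ} (mv : GameHist V k → Fin k → V)
    (c : ℕ → Fin k → V) (r : ℕ → V) : Prop :=
  ∀ n, c (n+1) = mv (histUpTo c r (n+1))

/-- Starting from the cop configuration `cpos` (the robber then chooses any starting
vertex, and the cops move first), the cops have a strategy catching the robber: in every
play consistent with the strategy there is a time at which some cop and the robber occupy
the same vertex, all cop moves made up to and including the capturing move being legal. -/
def CopsCatchFrom {V : Type*} (G : SimpleGraph V) {k : ℕ} (cpos : Fin k → V) : Prop :=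
  ∃ mv : GameHist V k → Fin k → V,
    ∀ (c : ℕ → Fin k → V) (r : ℕ → V),
      c 0 = cpos → FollowsStrat mv c r → RobberLegal G r →
      ∃ n, ((∃ i, c n i = r n) ∧ ∀ m < n, CopStepLegal G c m) ∨
           ((∃ i, c (n+1) i = r n) ∧ ∀ m ≤ n, CopStepLegal G c m)

/-- `k` cops have a winning strategy on `G`. -/
def CopsWinWith {V : Type*} (G : SimpleGraph V) (k : ℕ) : Prop :=
  ∃ cpos : Fin k → V, CopsCatchFrom G cpos

/-- The cop number of `G`: the least `k` such that `k` cops have a winning strategy. -/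
noncomputable def copNumber {V : Type*} (G : SimpleGraph V) : ℕ :=
  sInf {k | CopsWinWith G k}

/-- Starting from the zombie configuration `zpos` and survivor position `spos`, with the
zombies to move, the zombies have a strategy catching the survivor: in every play
consistent with the strategy there is a time at which some zombie and the survivor occupy
the same vertex, all zombie moves made up to and including the capturing move being legal
(each zombie moves along an edge, strictly decreasing its distance to the survivor). -/
def ZombiesCatchFrom {V : Type*} (G : SimpleGraph V) {k : ℕ} (zpos : Fin k → V) (spos : V) :
    Prop :=
  ∃ mv : GameHist V k → Fin k → V,
    ∀ (c : ℕ → Fin k → V) (r : ℕ → V),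
      c 0 = zpos → r 0 = spos → FollowsStrat mv c r → RobberLegal G r →
      ∃ n, ((∃ i, c n i = r n) ∧ ∀ m < n, ZombieStepLegal G c r m) ∨
           ((∃ i, c (n+1) i = r n) ∧ ∀ m ≤ n, ZombieStepLegal G c r m)

/-- `k` zombies have a winning strategy on `G`: they can choose starting vertices so that
wherever the survivor starts, they catch the survivor. -/
def ZombiesWinWith {V : Type*} (G : SimpleGraph V) (k : ℕ) : Prop :=
  ∃ zpos : Fin k → V, ∀ spos : V, ZombiesCatchFrom G zpos spos

/-- The zombie number of `G`: the least `k` such that `k` zombies have a winning strategy. -/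
noncomputable def zombieNumber {V : Type*} (G : SimpleGraph V) : ℕ :=
  sInf {k | ZombiesWinWith G k}

/-- Starting from the zombie configuration `zpos` and survivor position `spos`, with the
zombies to move, the survivor has a strategy evading capture forever: in every play where
the survivor follows the strategy and the zombies move legally, the survivor's moves are
legal and no zombie ever occupies the survivor's vertex. -/
def SurvivorEvadesFrom {V : Type*} (G : SimpleGraph V) {k : ℕ} (zpos : Fin k → V) (spos : V) :
    Prop :=
  ∃ mv : GameHist V k → (Fin k → V) → V,
    ∀ (c : ℕ → Fin k → V) (r : ℕ → V),
      c 0 = zpos → r 0 = spos →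
      (∀ n, r (n+1) = mv (histUpTo c r (n+1)) (c (n+1))) →
      (∀ n, ZombieStepLegal G c r n) →
      RobberLegal G r ∧ ∀ n, (∀ i, c n i ≠ r n) ∧ (∀ i, c (n+1) i ≠ r n)

/-- Zombie-move legality in the variant where in each round the survivor moves first:
at step `n` each zombie moves along an edge, strictly decreasing its distance to the
survivor's current position `r (n+1)`. -/
def ZombieStepLegalAfter {V : Type*} (G : SimpleGraph V) {k : ℕ} (c : ℕ → Fin k → V)
    (r : ℕ → V) (n : ℕ) : Prop :=
  ∀ i, G.Adj (c n i) (c (n+1) i) ∧ G.dist (c (n+1) i) (r (n+1)) < G.dist (c n i) (r (n+1))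

/-- Starting from the zombie configuration `zpos` and survivor position `spos`, with the
survivor to move (the zombies then responding each round), the zombies have a strategy
catching the survivor. -/
def ZombiesCatchFromSurvivorToMove {V : Type*} (G : SimpleGraph V) {k : ℕ}
    (zpos : Fin k → V) (spos : V) : Prop :=
  ∃ mv : GameHist V k → V → Fin k → V,
    ∀ (c : ℕ → Fin k → V) (r : ℕ → V),
      c 0 = zpos → r 0 = spos →
      (∀ n, c (n+1) = mv (histUpTo c r (n+1)) (r (n+1))) →
      RobberLegal G r →
      ∃ n, (∃ i, c 0 i = r 0) ∨
           ((∃ i, c n i = r (n+1)) ∧ ∀ m < n, ZombieStepLegalAfter G c r m) ∨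
           ((∃ i, c (n+1) i = r (n+1)) ∧ ∀ m ≤ n, ZombieStepLegalAfter G c r m)

/-! ### The graphs `T_x`, the arm graphs `A_n`, and attaching an arm to a graph -/

/-- `|i - j| = 1 or 4` for `i j : Fin 5`, i.e. `i` and `j` are cyclically consecutive. -/
def fin5adj (i j : Fin 5) : Prop :=
  ((i : ℕ) + 1) % 5 = (j : ℕ) ∨ ((j : ℕ) + 1) % 5 = (i : ℕ)

/-- The vertices of the arm graph `A_n`: the vertex `b₂⁻¹` (`start`), the vertex `b₀ⁿ`
(`finish`), and for each copy `T_x` (`x : Fin n`) the inside vertices `a_i^x`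
(`inner x i`), the outside vertices `b_i^x` (`outer x i`) and the center `c^x`
(`center x`). -/
inductive ArmVert (n : ℕ) : Type
  | start : ArmVert n
  | finish : ArmVert n
  | inner : Fin n → Fin 5 → ArmVert n
  | outer : Fin n → Fin 5 → ArmVert n
  | center : Fin n → ArmVert n
  deriving DecidableEq

/-- One direction of the edge relation of the arm graph `A_n`. -/
def armRel (n : ℕ) : ArmVert n → ArmVert n → Prop
  | .inner x i, .inner y j => x = y ∧ fin5adj i j
  | .outer x i, .outer y j => (x = y ∧ fin5adj i j) ∨ ((x : ℕ) + 1 = (y : ℕ) ∧ (i : ℕ) = 2 ∧ (j : ℕ) = 0)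
  | .inner x i, .outer y j => x = y ∧ (i = j ∨ fin5adj i j)
  | .inner x _, .center y => x = y
  | .start, .outer y j => (y : ℕ) = 0 ∧ (j : ℕ) = 0
  | .outer x i, .finish => (x : ℕ) + 1 = n ∧ (i : ℕ) = 2
  | .start, .finish => n = 0
  | _, _ => False

/-- The arm graph `A_n`. -/
def armGraph (n : ℕ) : SimpleGraph (ArmVert n) := SimpleGraph.fromRel (armRel n)

/-- The index of the copy `T_x` containing a vertex of `A_n` (if any). -/
def copyIdx {n : ℕ} : ArmVert n → Option (Fin n)
  | .inner x _ => some x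
  | .outer x _ => some x
  | .center x => some x
  | _ => none

/-- The vertex `b₀ˣ` of `A_n` (for `x = n` this is the final vertex `b₀ⁿ`). -/
def b0 (n x : ℕ) : ArmVert n :=
  if h : x < n then ArmVert.outer ⟨x, h⟩ 0 else ArmVert.finish

/-- The vertex `b₂^{x-1}` of `A_n` (for `x = 0` this is the vertex `b₂⁻¹`). -/
def b2prev (n x : ℕ) : ArmVert n :=
  if h : 1 ≤ x ∧ x - 1 < n then ArmVert.outer ⟨x - 1, h.2⟩ 2 else ArmVert.start

/-- The vertex lies in the copy `T_x`. -/
def InCopy {W : Type*} {n : ℕ} (x : ℕ) (u : W ⊕ ArmVert n) : Prop :=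
  ∃ (a : ArmVert n) (y : Fin n), u = Sum.inr a ∧ copyIdx a = some y ∧ (y : ℕ) = x

/-- One direction of the edge relation of the graph obtained from a graph `H` and the
arm `A_n` by adding an edge from the vertex `b₂⁻¹` of `A_n` to the vertex `v` of `H`. -/
def combRel {W : Type*} (H : SimpleGraph W) (v : W) (n : ℕ) :
    (W ⊕ ArmVert n) → (W ⊕ ArmVert n) → Prop
  | Sum.inl w, Sum.inl w' => H.Adj w w'
  | Sum.inr a, Sum.inr a' => (armGraph n).Adj a a'
  | Sum.inl w, Sum.inr a => w = v ∧ a = ArmVert.start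
  | _, _ => False

/-- The graph obtained from `H` and the arm `A_n` by adding an edge from the vertex
`b₂⁻¹` of `A_n` to the vertex `v` of `H`. -/
def combGraph {W : Type*} (H : SimpleGraph W) (v : W) (n : ℕ) :
    SimpleGraph (W ⊕ ArmVert n) :=
  SimpleGraph.fromRel (combRel H v n)

/-! ### The graphs `Z_{k,m}(H)` -/

/-- The vertices of `Z_{k,m}(H)` where `H` has vertex type `W` and `p = 4*(m-k)`:
the vertices of `H`, for each vertex of `H` a path on `p` vertices, and for each
vertex of `H` `m` copies of the arm graph `A_p`. -/
abbrev ZVert (W : Type*) (m p : ℕ) : Type _ := W ⊕ (W × Fin p) ⊕ (W × Fin m × ArmVert p)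

/-- One direction of the edge relation of `Z_{k,m}(H)`. -/
def zRel {W : Type*} (H : SimpleGraph W) (m p : ℕ) : ZVert W m p → ZVert W m p → Prop
  | Sum.inl w, Sum.inl w' => H.Adj w w'
  | Sum.inl w, Sum.inr (Sum.inl (w', j)) => w = w' ∧ (j : ℕ) = 0
  | Sum.inr (Sum.inl (w, j)), Sum.inr (Sum.inl (w', j')) => w = w' ∧ (j : ℕ) + 1 = (j' : ℕ)
  | Sum.inl w, Sum.inr (Sum.inr (w', _, a)) => w = w' ∧ a = ArmVert.start
  | Sum.inr (Sum.inr (w, i, a)), Sum.inr (Sum.inr (w', i', a')) =>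
      w = w' ∧ i = i' ∧ (armGraph p).Adj a a'
  | _, _ => False

/-- The graph `Z_{k,m}(H)`: to each vertex `v` of `H` we attach (by an edge from `v` to
the first path vertex, resp. to `b₂⁻¹`) one path on `4*(m-k)` vertices and `m` copies of
the arm graph `A_{4*(m-k)}`. -/
def ZGraph {W : Type*} (H : SimpleGraph W) (k m : ℕ) :
    SimpleGraph (ZVert W m (4 * (m - k))) :=
  SimpleGraph.fromRel (zRel H m (4 * (m - k)))

/-! ### Hypercubes and block intersection graphs -/

/-- The `n`-dimensional hypercube: vertices are `Fin n → Bool`, two vertices being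
adjacent exactly when they differ in exactly one coordinate. -/
def hypercube (n : ℕ) : SimpleGraph (Fin n → Bool) :=
  SimpleGraph.fromRel fun x y => ∃ i, x i ≠ y i ∧ ∀ j, j ≠ i → x j = y j

/-- `(P, B)` is a balanced incomplete block design with parameters `(v, k, 1)`:
`P` has `v` points, every block has `k` points, and every pair of distinct points lies
in exactly one block. -/
def IsBIBD (P : Type*) (B : Finset (Finset P)) (v k : ℕ) : Prop :=
  Nat.card P = v ∧ (∀ b ∈ B, b.card = k) ∧
    ∀ p q : P, p ≠ q → ∃! b : Finset P, b ∈ B ∧ p ∈ b ∧ q ∈ b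

/-- The block intersection graph of a collection `B` of blocks: vertices are the blocks,
two distinct blocks being adjacent exactly when they intersect. -/
def blockGraph {P : Type*} (B : Finset (Finset P)) : SimpleGraph {b // b ∈ B} :=
  SimpleGraph.fromRel fun b b' => ∃ p, p ∈ b.val ∧ p ∈ b'.val

/-! ### Zombie-good positions on a graph with an attached arm -/

/-- A position (with the zombies to move) in the game on the graph obtained by attaching
the arm `A_n` to `H` at `v` is `x`-zombie-good if: the survivor is in some `T_y` with
`y ≥ x` or at `b₀ⁿ`; for some `i ≥ 1` the zombies `z_1, …, z_i` are all at `b₀ˣ`; the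
remaining zombies are in `H ∪ {b₂⁻¹} ∪ T_0 ∪ ⋯ ∪ T_{x-1}`; consecutive zombie distances
to the survivor satisfy `0 ≤ d_{j+1} - d_j ≤ 4`; and `d_m - d_1 ≥ n - x`. -/
def ZombieGood {W : Type*} (H : SimpleGraph W) (v : W) (n m x : ℕ)
    (zpos : Fin m → (W ⊕ ArmVert n)) (spos : W ⊕ ArmVert n) : Prop :=
  (∃ a : ArmVert n, spos = Sum.inr a ∧
      ((∃ y : Fin n, copyIdx a = some y ∧ x ≤ (y : ℕ)) ∨ a = ArmVert.finish)) ∧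
  (∃ i : ℕ, 1 ≤ i ∧ i ≤ m ∧
      (∀ j : Fin m, (j : ℕ) < i → zpos j = Sum.inr (b0 n x)) ∧
      (∀ j : Fin m, i ≤ (j : ℕ) →
        (∃ w, zpos j = Sum.inl w) ∨ zpos j = Sum.inr ArmVert.start ∨
          (∃ (a : ArmVert n) (y : Fin n), zpos j = Sum.inr a ∧ copyIdx a = some y ∧ (y : ℕ) < x))) ∧
  (∀ j : Fin m, ∀ h : (j : ℕ) + 1 < m,
      (combGraph H v n).dist spos (zpos j) ≤ (combGraph H v n).dist spos (zpos ⟨(j : ℕ) + 1, h⟩) ∧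
      (combGraph H v n).dist spos (zpos ⟨(j : ℕ) + 1, h⟩) - (combGraph H v n).dist spos (zpos j) ≤ 4) ∧
  (∀ hm : 1 ≤ m,
      n - x ≤ (combGraph H v n).dist spos (zpos ⟨m - 1, by omega⟩) -
        (combGraph H v n).dist spos (zpos ⟨0, by omega⟩))

/-!
The graph consists of a Hamming graph on three letters with `k` coordinates, a long path starting
in it, and `g` gadgets: pentagonal rings whose vertices are joined, through a second layer of five
vertices, to one vertex of the path, the hub.

Fewer than `k` cops lose to a robber who stays in the Hamming graph, because they cannot close all
the directions in which he may leave. On the other hand, `k` cops catch the robber's shadow in the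
Hamming graph by correcting coordinates. From then on he cannot return there, so that they follow
him up the path and clear his gadget with five of them.

A survivor who runs round a ring outruns a single zombie behind him, so the zombies need two in
each gadget at the start. These suffice if the hubs are placed at two heights of the path: a zombie
coming down from a high gadget keeps the survivor below it while `k` zombies from low gadgets catch
his shadow in the Hamming graph.

So `c = k` and `z = 2 * g`, and for `a > b` the choice `k = 6 * b`, `g = 3 * a` makes the ratio
`a / b`.
-/

/-! ### Positions of the pursuit game -/

section Games

variable {V ι κ : Type*} {G : SimpleGraph V}

/-- A move of a player who may also stay still. -/
def LazyAdj (G : SimpleGraph V) (u v : V) : Prop := v = u ∨ G.Adj u v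

theorem LazyAdj.symm {u v : V} (h : LazyAdj G u v) : LazyAdj G v u :=
  Or.imp Eq.symm SimpleGraph.Adj.symm h

/-- The zombies at `c` may move to `c'` when the survivor is at `r`. -/
def ZombieStep (G : SimpleGraph V) (c : ι → V) (r : V) (c' : ι → V) : Prop :=
  ∀ i, G.Adj (c i) (c' i) ∧ G.dist (c' i) r < G.dist (c i) r

/-- The cops at `c` may move to `c'`; the unused position of the robber makes this a rule of the
same shape as `ZombieStep`. -/
def CopStep (G : SimpleGraph V) (c : ι → V) (_ : V) (c' : ι → V) : Prop :=
  ∀ i, LazyAdj G (c i) (c' i)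

/-- The positions (pursuers at `c`, evader at `r`, pursuers to move) won by pursuers who move
according to the rule `step`. -/
inductive PursuersWin (G : SimpleGraph V) (step : (ι → V) → V → (ι → V) → Prop) :
    (ι → V) → V → Prop
  | caught {c : ι → V} {r : V} (i : ι) (h : c i = r) : PursuersWin G step c r
  | capture {c c' : ι → V} {r : V} (hs : step c r c') (i : ι) (h : c' i = r) :
      PursuersWin G step c r
  | move {c c' : ι → V} {r : V} (hs : step c r c')
      (h : ∀ r', LazyAdj G r r' → PursuersWin G step c' r') : PursuersWin G step c r

/-- The positions won by zombies. -/
abbrev ZombiesWin (G : SimpleGraph V) (c : ι → V) (r : V) : Prop :=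
  PursuersWin G (ZombieStep G) c r

/-- The positions won by cops. -/
abbrev CopsWin (G : SimpleGraph V) (c : ι → V) (r : V) : Prop :=
  PursuersWin G (CopStep G) c r

theorem PursuersWin.move_or_capture {step : (ι → V) → V → (ι → V) → Prop} {c c' : ι → V} {r : V}
    (hs : step c r c')
    (h : (∀ i, c' i ≠ r) → ∀ r', LazyAdj G r r' → PursuersWin G step c' r') :
    PursuersWin G step c r := by
  by_cases hc : ∃ i, c' i = r
  · exact .capture hs hc.choose hc.choose_spec
  · exact .move hs (h (not_exists.1 hc))

/-! ### Additional pursuers do no harm -/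

theorem PursuersWin.of_comp {stepκ : (κ → V) → V → (κ → V) → Prop}
    {stepι : (ι → V) → V → (ι → V) → Prop} {f : κ → ι}
    (extend : ∀ c r d, (∀ i, c i ≠ r) → stepκ (c ∘ f) r d → ∃ c', stepι c r c' ∧ c' ∘ f = d)
    {c : ι → V} {r : V} (h : PursuersWin G stepκ (c ∘ f) r) : PursuersWin G stepι c r := by
  generalize hb : c ∘ f = b at h
  induction h generalizing c with
  | caught i h => exact .caught (f i) (by rw [← h, ← hb, Function.comp_apply])
  | @capture b d r hs i h =>
    by_cases hc : ∃ i, c i = r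
    · exact .caught _ hc.choose_spec
    · obtain ⟨c', hs', rfl⟩ := extend c r d (not_exists.1 hc) (hb ▸ hs)
      exact .capture hs' (f i) h
  | @move b d r hs _ ih =>
    by_cases hc : ∃ i, c i = r
    · exact .caught _ hc.choose_spec
    · obtain ⟨c', hs', hd⟩ := extend c r d (not_exists.1 hc) (hb ▸ hs)
      exact .move hs' fun r' hr' => ih r' hr' hd

theorem exists_adj_dist_lt (hG : G.Connected) {v r : V} (h : v ≠ r) :
    ∃ w, G.Adj v w ∧ G.dist w r < G.dist v r := by
  obtain ⟨p, hp⟩ := hG.exists_walk_length_eq_dist v r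
  cases p with
  | nil => exact absurd rfl h
  | cons hadj q =>
    refine ⟨_, hadj, ?_⟩
    rw [← hp, Walk.length_cons]
    exact Nat.lt_succ_of_le (dist_le q)

theorem ZombiesWin.of_comp (hG : G.Connected) {f : κ → ι} (hf : f.Injective) {c : ι → V} {r : V}
    (h : ZombiesWin G (c ∘ f) r) : ZombiesWin G c r := by
  refine PursuersWin.of_comp (fun c r d hc hs => ?_) h
  choose closer hcloser using fun i => exists_adj_dist_lt hG (hc i)
  refine ⟨Function.extend f d closer, fun i => ?_, Function.extend_comp hf d closer⟩
  by_cases hi : ∃ a, f a = i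
  · obtain ⟨a, rfl⟩ := hi
    rw [hf.extend_apply]
    exact hs a
  · rw [Function.extend_apply' _ _ _ hi]
    exact hcloser i

theorem CopsWin.of_comp {f : κ → ι} (hf : f.Injective) {c : ι → V} {r : V}
    (h : CopsWin G (c ∘ f) r) : CopsWin G c r := by
  refine PursuersWin.of_comp (fun c r d _ hs => ?_) h
  refine ⟨Function.extend f d c, fun i => ?_, Function.extend_comp hf d c⟩
  by_cases hi : ∃ a, f a = i
  · obtain ⟨a, rfl⟩ := hi
    rw [hf.extend_apply]
    exact hs a
  · rw [Function.extend_apply' _ _ _ hi]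
    exact .inl rfl

theorem ZombiesWin.of_lazyAdj (hG : G.Connected) {c : ι → V} {r : V} (i : ι)
    (h : LazyAdj G r (c i)) : ZombiesWin G c r := by
  obtain h | h := h
  · exact .caught i h
  · refine of_comp hG (f := fun _ : Unit => i) (Function.injective_of_subsingleton _)
      (.capture (c' := fun _ => r) (fun _ => ⟨h.symm, ?_⟩) () rfl)
    rw [dist_self]
    exact hG.pos_dist_of_ne h.ne.symm

/-! ### Winning strategies from won positions -/

/-- The common form of `ZombiesCatchFrom` and `CopsCatchFrom`, for an arbitrary rule of motion of
the pursuers and a prescribed initial position of the evader. -/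
def CatchFrom (G : SimpleGraph V) {k : ℕ} (step : (Fin k → V) → V → (Fin k → V) → Prop)
    (c₀ : Fin k → V) (r₀ : V) : Prop :=
  ∃ mv : GameHist V k → Fin k → V, ∀ (c : ℕ → Fin k → V) (r : ℕ → V),
    c 0 = c₀ → r 0 = r₀ → FollowsStrat mv c r → RobberLegal G r →
    ∃ n, ((∃ i, c n i = r n) ∧ ∀ m < n, step (c m) (r m) (c (m + 1))) ∨
         ((∃ i, c (n + 1) i = r n) ∧ ∀ m ≤ n, step (c m) (r m) (c (m + 1)))

theorem histUpTo_eq_cons {k : ℕ} (c : ℕ → Fin k → V) (r : ℕ → V) (n : ℕ) :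
    histUpTo c r (n + 1) = (c 0, r 0) :: histUpTo (fun i => c (i + 1)) (fun i => r (i + 1)) n := by
  simp only [histUpTo, List.range_succ_eq_map, List.map_cons, List.map_map, Function.comp_def]

theorem PursuersWin.catchFrom {k : ℕ} {step : (Fin k → V) → V → (Fin k → V) → Prop}
    {c₀ : Fin k → V} {r₀ : V} (h : PursuersWin G step c₀ r₀) : CatchFrom G step c₀ r₀ := by
  induction h with
  | @caught c₀ r₀ i h =>
    refine ⟨fun _ => c₀, fun c r hc hr _ _ =>
      ⟨0, .inl ⟨⟨i, by rw [hc, hr, h]⟩, fun m hm => absurd hm m.not_lt_zero⟩⟩⟩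
  | @capture c₀ c₁ r₀ hs i h =>
    refine ⟨fun _ => c₁, fun c r hc hr hfollow _ => ?_⟩
    have hc₁ : c 1 = c₁ := hfollow 0
    refine ⟨0, .inr ⟨⟨i, by rw [hc₁, hr, h]⟩, fun m hm => ?_⟩⟩
    obtain rfl := Nat.le_zero.1 hm
    rwa [hc, hr, hc₁]
  | @move c₀ c₁ r₀ hs _ ih =>
    have : Nonempty (GameHist V k → Fin k → V) := ⟨fun _ => c₁⟩
    choose! mv hmv using ih
    let strategy : GameHist V k → Fin k → V
      | _ :: p :: h => mv p.2 (p :: h)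
      | _ => c₁
    refine ⟨strategy, fun c r hc hr hfollow hlegal => ?_⟩
    have hc₁ : c 1 = c₁ := hfollow 0
    have hfirst : step (c 0) (r 0) (c 1) := by rwa [hc, hr, hc₁]
    have hlater : FollowsStrat (mv (r 1)) (fun n => c (n + 1)) (fun n => r (n + 1)) := fun n => by
      simp only [hfollow (n + 1), histUpTo_eq_cons, strategy]
    obtain ⟨n, hn⟩ := hmv (r 1) (hr ▸ hlegal 0) _ _ hc₁ rfl hlater fun n => hlegal (n + 1)
    refine ⟨n + 1, hn.imp (And.imp_right fun h m hm => ?_) (And.imp_right fun h m hm => ?_)⟩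
    · cases m with
      | zero => exact hfirst
      | succ m => exact h m (Nat.lt_of_succ_lt_succ hm)
    · cases m with
      | zero => exact hfirst
      | succ m => exact h m (Nat.le_of_succ_le_succ hm)

theorem zombiesWinWith_card [Fintype ι] (hG : G.Connected) {c : ι → V}
    (h : ∀ r, ZombiesWin G c r) : ZombiesWinWith G (Fintype.card ι) := by
  let e := Fintype.equivFin ι
  refine ⟨c ∘ e.symm, fun r => PursuersWin.catchFrom (ZombiesWin.of_comp hG e.injective ?_)⟩
  rw [Function.comp_assoc, e.symm_comp_self]
  exact h r

theorem copsWinWith {k : ℕ} {c : Fin k → V} (h : ∀ r, CopsWin G c r) : CopsWinWith G k := by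
  choose mv hmv using fun r => (h r).catchFrom
  let strategy : GameHist V k → Fin k → V
    | p :: h => mv p.2 (p :: h)
    | [] => c
  refine ⟨c, strategy, fun d r hd hfollow => hmv (r 0) d r hd rfl fun n => ?_⟩
  simp only [hfollow n, histUpTo_eq_cons, strategy]

/-! ### Evasion -/

/-- `Safe` is an invariant, depending only on the current position with the pursuers to move, that
the evader can maintain forever without being caught. -/
structure EvasionInvariant (G : SimpleGraph V) (step : (ι → V) → V → (ι → V) → Prop)
    (Safe : (ι → V) → V → Prop) : Prop where
  not_caught : ∀ {c r}, Safe c r → ∀ i, c i ≠ r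
  not_captured : ∀ {c r c'}, Safe c r → step c r c' → ∀ i, c' i ≠ r
  reply : ∀ {c r c'}, Safe c r → step c r c' → ∃ r', LazyAdj G r r' ∧ Safe c' r'

theorem exists_play {k : ℕ} (mv : GameHist V k → Fin k → V)
    (reply : (Fin k → V) → V → (Fin k → V) → V) (c₀ : Fin k → V) (r₀ : V) :
    ∃ c r, c 0 = c₀ ∧ r 0 = r₀ ∧ FollowsStrat mv c r ∧
      ∀ n, r (n + 1) = reply (c n) (r n) (c (n + 1)) := by
  let next (s : GameHist V k × (Fin k → V) × V) : GameHist V k × (Fin k → V) × V :=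
    let h := s.1 ++ [s.2]
    (h, mv h, reply s.2.1 s.2.2 (mv h))
  let state (n : ℕ) : GameHist V k × (Fin k → V) × V := next^[n] ([], c₀, r₀)
  have hstate (n : ℕ) : state (n + 1) = next (state n) := Function.iterate_succ_apply' next n _
  have hhist (n : ℕ) :
      (state n).1 = histUpTo (fun n => (state n).2.1) (fun n => (state n).2.2) n := by
    induction n with
    | zero => rfl
    | succ n ih =>
      simp only [histUpTo, List.range_succ, List.map_append, List.map_cons, List.map_nil] at ih ⊢
      rw [← ih, hstate]
  refine ⟨fun n => (state n).2.1, fun n => (state n).2.2, rfl, rfl, fun n => ?_, fun n => ?_⟩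
  · rw [← hhist]
    simp only [hstate, next]
  · simp only [hstate, next]

theorem EvasionInvariant.not_catchFrom {k : ℕ} {step : (Fin k → V) → V → (Fin k → V) → Prop}
    {Safe : (Fin k → V) → V → Prop} (h : EvasionInvariant G step Safe) {c₀ : Fin k → V} {r₀ : V}
    (h₀ : Safe c₀ r₀) : ¬ CatchFrom G step c₀ r₀ := by
  rintro ⟨mv, hmv⟩
  have hreply (c : Fin k → V) (r : V) (c' : Fin k → V) :
      ∃ r', LazyAdj G r r' ∧ (Safe c r → step c r c' → Safe c' r') := by
    by_cases hs : Safe c r ∧ step c r c'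
    · exact (h.reply hs.1 hs.2).imp fun _ h => ⟨h.1, fun _ _ => h.2⟩
    · exact ⟨r, .inl rfl, fun h₁ h₂ => absurd ⟨h₁, h₂⟩ hs⟩
  choose reply hlegal hsafe using hreply
  obtain ⟨c, r, hc, hr, hfollow, hplay⟩ := exists_play mv reply c₀ r₀
  have safe (n : ℕ) (hn : ∀ m < n, step (c m) (r m) (c (m + 1))) : Safe (c n) (r n) := by
    induction n with
    | zero => rwa [hc, hr]
    | succ n ih =>
      rw [hplay]
      exact hsafe _ _ _ (ih fun m hm => hn m (hm.trans n.lt_succ_self)) (hn n n.lt_succ_self)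
  obtain ⟨n, ⟨⟨i, hi⟩, hn⟩ | ⟨⟨i, hi⟩, hn⟩⟩ := hmv c r hc hr hfollow fun n => by
    rw [hplay]
    exact hlegal _ _ _
  · exact h.not_caught (safe n hn) i hi
  · exact h.not_captured (safe n fun m hm => hn m hm.le) (hn n le_rfl) i hi

theorem EvasionInvariant.not_zombiesWinWith {k : ℕ} {Safe : (Fin k → V) → V → Prop}
    (h : EvasionInvariant G (ZombieStep G) Safe) (start : ∀ z, ∃ s, Safe z s) :
    ¬ ZombiesWinWith G k := by
  rintro ⟨z, hz⟩
  obtain ⟨s, hs⟩ := start z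
  exact h.not_catchFrom hs (hz s)

theorem EvasionInvariant.not_copsWinWith {k : ℕ} {Safe : (Fin k → V) → V → Prop}
    (h : EvasionInvariant G (CopStep G) Safe) (start : ∀ c, ∃ r, Safe c r) :
    ¬ CopsWinWith G k := by
  rintro ⟨c, mv, hmv⟩
  obtain ⟨r, hr⟩ := start c
  exact h.not_catchFrom hr ⟨mv, fun d s hd _ => hmv d s hd⟩

end Games

/-! ### Distances in graphs -/

section Distance

variable {V : Type*} {G : SimpleGraph V}

theorem reachable_and_dist_eq_of_descent {f : V → ℕ} {r : V} (hr : f r = 0)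
    (lipschitz : ∀ v w, G.Adj v w → f v ≤ f w + 1)
    (descent : ∀ v, v ≠ r → ∃ w, G.Adj v w ∧ f w < f v) (v : V) :
    G.Reachable v r ∧ G.dist v r = f v := by
  have short_walk (n : ℕ) : ∀ v, f v ≤ n → ∃ p : G.Walk v r, p.length ≤ n := by
    induction n with
    | zero =>
      intro v hv
      by_cases h : v = r
      · exact h ▸ ⟨Walk.nil, le_rfl⟩
      · obtain ⟨w, -, hw⟩ := descent v h
        omega
    | succ n ih =>
      intro v hv
      by_cases h : v = r
      · exact h ▸ ⟨Walk.nil, Nat.zero_le _⟩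
      · obtain ⟨w, hvw, hw⟩ := descent v h
        obtain ⟨p, hp⟩ := ih w (by omega)
        exact ⟨.cons hvw p, Nat.succ_le_succ hp⟩
  have le_length {v w : V} (p : G.Walk v w) : f v ≤ f w + p.length := by
    induction p with
    | nil => exact Nat.le_add_right _ _
    | cons h p ih =>
      have := lipschitz _ _ h
      rw [Walk.length_cons]
      omega
  obtain ⟨p, hp⟩ := short_walk (f v) v le_rfl
  obtain ⟨q, hq⟩ := p.reachable.exists_walk_length_eq_dist
  have := le_length q
  exact ⟨p.reachable, le_antisymm ((dist_le p).trans hp) (by omega)⟩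

theorem dist_lt_of_adj (hG : G.Connected) {x y r : V} (hx : ¬ LazyAdj G r x) (hy : G.Adj y r) :
    G.dist y r < G.dist x r := by
  rw [dist_eq_one_iff_adj.2 hy]
  exact hG.one_lt_dist_of_ne_of_not_adj (fun h => hx (.inl h)) fun h => hx (.inr h.symm)

theorem dist_lt_of_adj_of_adj (hG : G.Connected) {x y w r : V} (hx : ¬ LazyAdj G r x)
    (hcommon : ∀ u, G.Adj x u → ¬ G.Adj u r) (hyw : G.Adj y w) (hwr : G.Adj w r) :
    G.dist y r < G.dist x r := by
  refine (dist_le (.cons hyw (.cons hwr .nil))).trans_lt ?_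
  obtain ⟨p, hp⟩ := hG.exists_walk_length_eq_dist x r
  rw [← hp]
  rcases p with _ | ⟨h, _ | ⟨h', _ | ⟨_, q⟩⟩⟩
  · exact absurd (.inl rfl) hx
  · exact absurd (.inr h.symm) hx
  · exact absurd h' (hcommon _ h)
  · simp only [Walk.length_cons, Walk.length_nil]
    omega

theorem lazyAdj_of_dist_lt (hG : G.Connected) {x y w r : V} (h : G.dist y r < G.dist x r)
    (hxw : G.Adj x w) (hwr : G.Adj w r) : LazyAdj G r y := by
  by_contra hy
  have hxr : G.dist x r ≤ 2 := dist_le (.cons hxw (.cons hwr .nil))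
  have := hG.one_lt_dist_of_ne_of_not_adj (fun h => hy (.inl h)) fun h => hy (.inr h.symm)
  omega

end Distance

/-! ### Hamming distance -/

section Hamming

variable {ι κ α : Type*} [Fintype ι] [DecidableEq α]

theorem exists_forall_ne_eq_of_hammingDist_le_one [Nonempty ι] {x y : ι → α}
    (h : hammingDist x y ≤ 1) : ∃ m, ∀ j, j ≠ m → x j = y j := by
  obtain ⟨m, hm⟩ := Finset.card_le_one_iff_subset_singleton.1 h
  refine ⟨m, fun j hj => ?_⟩
  by_contra hne
  exact hj (Finset.mem_singleton.1 (hm ((Finset.mem_filter_univ j).2 hne)))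

/-- The neighbours of `y` in the Hamming graph, encoded by the coordinate that changes and its new
value. -/
def hammingMoves [Fintype α] (y : ι → α) : Finset (Σ _ : ι, α) :=
  Finset.univ.sigma fun l => Finset.univ.erase (y l)

theorem card_hammingMoves [Fintype α] (y : ι → α) :
    (hammingMoves y).card = Fintype.card ι * (Fintype.card α - 1) := by
  simp only [hammingMoves, Finset.card_sigma, Finset.card_erase_of_mem (Finset.mem_univ _),
    Finset.card_univ, Finset.sum_const, smul_eq_mul]

variable [DecidableEq ι]

theorem hammingDist_update_self {x : ι → α} {j : ι} {a : α} (h : x j ≠ a) :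
    hammingDist x (Function.update x j a) = 1 := by
  rw [hammingDist, Finset.card_eq_one]
  refine ⟨j, Finset.ext fun l => ?_⟩
  rw [Finset.mem_filter_univ, Finset.mem_singleton]
  obtain rfl | hl := eq_or_ne l j
  · simp only [Function.update_self, ne_eq, h, not_false_eq_true]
  · simp only [Function.update_of_ne hl, ne_eq, not_true_eq_false, hl]

theorem hammingDist_update_lt {x y : ι → α} {j : ι} (h : x j ≠ y j) :
    hammingDist (Function.update x j (y j)) y < hammingDist x y := by
  refine Finset.card_lt_card (Finset.ssubset_iff_of_subset (fun l => ?_) |>.2 ⟨j, ?_⟩)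
  · simp only [Finset.mem_filter_univ]
    obtain rfl | hl := eq_or_ne l j
    · exact fun _ => h
    · rw [Function.update_of_ne hl]
      exact id
  · simp only [Finset.mem_filter_univ, Function.update_self, ne_eq, not_true_eq_false]
    exact ⟨h, not_false⟩

omit [DecidableEq ι] in
theorem exists_hammingDist_lt {x y : ι → α} (h : x ≠ y) :
    ∃ x', hammingDist x x' = 1 ∧ hammingDist x' y < hammingDist x y := by
  classical
  obtain ⟨j, hj⟩ := Function.ne_iff.1 h
  exact ⟨_, hammingDist_update_self hj, hammingDist_update_lt hj⟩

/-- The number of coordinates other than `i` in which `x` and `y` differ. -/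
def offDist (i : ι) (x y : ι → α) : ℕ := Finset.card {j | j ≠ i ∧ x j ≠ y j}

/-- The potential of the chase of `y` by one pursuer `x i` for each coordinate `i`. -/
def chasePotential (x : ι → ι → α) (y : ι → α) : ℕ := ∑ i, offDist i (x i) y

theorem chasePotential_le (x : ι → ι → α) (y : ι → α) :
    chasePotential x y ≤ Fintype.card ι * Fintype.card ι :=
  Finset.sum_le_card_nsmul _ _ _ fun _ _ => Finset.card_le_univ _

theorem offDist_le_succ {i m : ι} {x y y' : ι → α} (h : ∀ j, j ≠ m → y j = y' j) :
    offDist i x y' ≤ offDist i x y + 1 := by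
  refine (Finset.card_le_card fun j hj => ?_).trans (Finset.card_insert_le m _)
  rw [Finset.mem_insert, Finset.mem_filter_univ]
  rw [Finset.mem_filter_univ] at hj
  obtain rfl | hjm := eq_or_ne j m
  · exact .inl rfl
  · exact .inr (by rwa [h j hjm])

theorem offDist_eq_of_forall_ne {i : ι} {x y y' : ι → α} (h : ∀ j, j ≠ i → y j = y' j) :
    offDist i x y' = offDist i x y := by
  refine congrArg Finset.card (Finset.filter_congr fun j _ => and_congr_right fun hj => ?_)
  rw [h j hj]

theorem exists_offDist_lt_or_eq (i : ι) {x y : ι → α} (h : x ≠ y) :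
    ∃ x', hammingDist x x' = 1 ∧ hammingDist x' y < hammingDist x y ∧
      (x' = y ∨ offDist i x' y < offDist i x y) := by
  by_cases hoff : ∃ j, j ≠ i ∧ x j ≠ y j
  · obtain ⟨j, hji, hj⟩ := hoff
    refine ⟨_, hammingDist_update_self hj, hammingDist_update_lt hj, .inr ?_⟩
    refine Finset.card_lt_card (Finset.ssubset_iff_of_subset (fun l => ?_) |>.2 ⟨j, ?_⟩)
    · simp only [Finset.mem_filter_univ]
      obtain rfl | hl := eq_or_ne l j
      · exact fun _ => ⟨hji, hj⟩
      · rw [Function.update_of_ne hl]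
        exact id
    · simp only [Finset.mem_filter_univ, Function.update_self]
      exact ⟨⟨hji, hj⟩, fun h => h.2 rfl⟩
  · push Not at hoff
    have hi : x i ≠ y i := fun hi => h (funext fun j => by
      obtain rfl | hj := eq_or_ne j i
      exacts [hi, hoff j hj])
    refine ⟨_, hammingDist_update_self hi, hammingDist_update_lt hi, .inl (funext fun j => ?_)⟩
    obtain rfl | hj := eq_or_ne j i
    · exact Function.update_self ..
    · rw [Function.update_of_ne hj, hoff j hj]

/-- Each pursuer `i` corrects a coordinate other than `i`. A reply of the evader in coordinate `m`
undoes at most the progress of the pursuers other than `m`. -/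
theorem exists_capture_or_chasePotential_lt [Nonempty ι] {x : ι → ι → α} {y : ι → α}
    (h : ∀ i, x i ≠ y) :
    ∃ x' : ι → ι → α,
      (∀ i, hammingDist (x i) (x' i) = 1 ∧ hammingDist (x' i) y < hammingDist (x i) y) ∧
      ((∃ i, x' i = y) ∨
        ∀ y', hammingDist y y' ≤ 1 → chasePotential x' y' < chasePotential x y) := by
  choose x' hadj hcloser hoff using fun i => exists_offDist_lt_or_eq i (h i)
  refine ⟨x', fun i => ⟨hadj i, hcloser i⟩, or_iff_not_imp_left.2 fun hfree y' hy' => ?_⟩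
  replace hoff (i : ι) : offDist i (x' i) y < offDist i (x i) y :=
    (hoff i).resolve_left (not_exists.1 hfree i)
  obtain ⟨m, hm⟩ := exists_forall_ne_eq_of_hammingDist_le_one hy'
  refine Finset.sum_lt_sum (fun i _ => (offDist_le_succ hm).trans (hoff i))
    ⟨m, Finset.mem_univ m, ?_⟩
  rw [offDist_eq_of_forall_ne hm]
  exact hoff m

theorem apply_eq_of_hammingDist_update_le_one {x y : ι → α} {l l' : ι} {a : α}
    (h : hammingDist x (Function.update y l a) ≤ 1) (hl : l' ≠ l) (hx : x l' ≠ y l') :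
    x l = a ∧ ∀ j, j ≠ l → j ≠ l' → x j = y j := by
  have : Nonempty ι := ⟨l⟩
  obtain ⟨m, hm⟩ := exists_forall_ne_eq_of_hammingDist_le_one h
  obtain rfl : l' = m := by
    by_contra hne
    have := hm l' hne
    rw [Function.update_of_ne hl] at this
    exact hx this
  refine ⟨by rw [hm l hl.symm, Function.update_self], fun j hj hj' => ?_⟩
  rw [hm j hj', Function.update_of_ne hj]

theorem card_filter_hammingMoves_le [Fintype α] (hα : 3 ≤ Fintype.card α) {x y : ι → α}
    (h : x ≠ y) :
    ((hammingMoves y).filter fun p => hammingDist x (Function.update y p.1 p.2) ≤ 1).card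
      ≤ Fintype.card α - 1 := by
  obtain ⟨l₁, hl₁⟩ := Function.ne_iff.1 h
  by_cases h₂ : ∃ l₂, l₂ ≠ l₁ ∧ x l₂ ≠ y l₂
  · obtain ⟨l₂, hl, hl₂⟩ := h₂
    have hsub : ((hammingMoves y).filter fun p => hammingDist x (Function.update y p.1 p.2) ≤ 1)
        ⊆ {⟨l₁, x l₁⟩, ⟨l₂, x l₂⟩} := by
      rintro ⟨l, a⟩ hp
      have hp : hammingDist x (Function.update y l a) ≤ 1 := (Finset.mem_filter.1 hp).2
      rw [Finset.mem_insert, Finset.mem_singleton]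
      obtain rfl | hne₁ := eq_or_ne l l₁
      · obtain rfl := (apply_eq_of_hammingDist_update_le_one hp hl hl₂).1
        exact .inl rfl
      · obtain ⟨rfl, hrest⟩ := apply_eq_of_hammingDist_update_le_one hp hne₁.symm hl₁
        obtain rfl : l₂ = l := by
          by_contra hne₂
          exact hl₂ (hrest l₂ hne₂ hl)
        exact .inr rfl
    exact (Finset.card_le_card hsub).trans (Finset.card_le_two.trans (by omega))
  · push Not at h₂
    have hsub : ((hammingMoves y).filter fun p => hammingDist x (Function.update y p.1 p.2) ≤ 1)
        ⊆ (Finset.univ.erase (y l₁)).map ⟨Sigma.mk l₁, sigma_mk_injective⟩ := by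
      rintro ⟨l, a⟩ hp
      have ha : a ∈ Finset.univ.erase (y l) := (Finset.mem_sigma.1 (Finset.mem_filter.1 hp).1).2
      have hp : hammingDist x (Function.update y l a) ≤ 1 := (Finset.mem_filter.1 hp).2
      obtain rfl : l = l₁ := by
        by_contra hne
        obtain ⟨rfl, -⟩ := apply_eq_of_hammingDist_update_le_one hp (Ne.symm hne) hl₁
        exact Finset.ne_of_mem_erase ha (h₂ l hne)
      exact Finset.mem_map_of_mem _ ha
    refine (Finset.card_le_card hsub).trans_eq ?_
    rw [Finset.card_map, Finset.card_erase_of_mem (Finset.mem_univ _), Finset.card_univ]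

omit [DecidableEq ι] in
theorem exists_hammingDist_eq_one_forall_one_lt [Fintype κ] [Fintype α]
    (hα : 3 ≤ Fintype.card α) (hκ : Fintype.card κ < Fintype.card ι)
    {x : κ → ι → α} {y : ι → α} (h : ∀ i, x i ≠ y) :
    ∃ y', hammingDist y y' = 1 ∧ ∀ i, 1 < hammingDist (x i) y' := by
  classical
  by_contra! hblocked
  have hcover : hammingMoves y ⊆ Finset.univ.biUnion fun i => (hammingMoves y).filter
      fun p => hammingDist (x i) (Function.update y p.1 p.2) ≤ 1 := by
    intro p hp
    have hne := Finset.ne_of_mem_erase (Finset.mem_sigma.1 hp).2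
    obtain ⟨i, hi⟩ := hblocked _ (hammingDist_update_self hne.symm)
    exact Finset.mem_biUnion.2 ⟨i, Finset.mem_univ i, Finset.mem_filter.2 ⟨hp, hi⟩⟩
  have hcard := (Finset.card_le_card hcover).trans
    (Finset.card_biUnion_le_card_mul _ _ _ fun i _ => card_filter_hammingMoves_le hα (h i))
  rw [card_hammingMoves, Finset.card_univ] at hcard
  exact absurd (Nat.le_of_mul_le_mul_right hcard (by omega)) (not_le.2 hκ)

end Hamming

/-! ### The gadget graph -/

/-- The vertices of the gadget graph: a core, which is a Hamming graph with `k` coordinates over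
three letters, a path of `R` spine vertices, and for each `j : J` a gadget with five inner and five
outer vertices. -/
inductive GadgetVertex (k R : ℕ) (J : Type*) : Type _
  | core : (Fin k → Fin 3) → GadgetVertex k R J
  | spine : Fin R → GadgetVertex k R J
  | inner : J → ZMod 5 → GadgetVertex k R J
  | outer : J → ZMod 5 → GadgetVertex k R J

namespace GadgetVertex

variable {k R : ℕ} {J : Type*}

instance [Finite J] : Finite (GadgetVertex k R J) := by
  let encode : GadgetVertex k R J → (Fin k → Fin 3) ⊕ Fin R ⊕ J × ZMod 5 ⊕ J × ZMod 5
    | core x => .inl x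
    | spine i => .inr (.inl i)
    | inner j t => .inr (.inr (.inl (j, t)))
    | outer j t => .inr (.inr (.inr (j, t)))
  refine Finite.of_injective encode fun v w h => ?_
  cases v <;> cases w <;> simp_all [encode]

/-- Adjacency in the gadget graph. The spine starts at the vertex `0` of the core, the spokes of
gadget `j` join its inner vertices to the spine vertex `hub j`, and the outer vertices form a ring
on which the inner vertices are pendant. -/
@[simp]
def AdjRel (hub : J → Fin R) : GadgetVertex k R J → GadgetVertex k R J → Prop
  | core x, core y => hammingDist x y = 1
  | core x, spine i => x = 0 ∧ i.val = 0
  | spine i, core x => x = 0 ∧ i.val = 0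
  | spine i, spine i' => i.val + 1 = i'.val ∨ i'.val + 1 = i.val
  | spine i, inner j _ => hub j = i
  | inner j _, spine i => hub j = i
  | inner j t, outer j' t' => j = j' ∧ t = t'
  | outer j t, inner j' t' => j = j' ∧ t = t'
  | outer j t, outer j' t' => j = j' ∧ (t' = t + 1 ∨ t = t' + 1)
  | _, _ => False

/-- The gadget graph whose gadget `j` hangs at the spine vertex `hub j`. -/
def gadgetGraph (k : ℕ) (hub : J → Fin R) : SimpleGraph (GadgetVertex k R J) where
  Adj := AdjRel hub
  symm := ⟨fun v w h => by
    cases v <;> cases w <;> simp only [AdjRel] at h ⊢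
    case core.core => rwa [hammingDist_comm]
    case outer.outer => exact ⟨h.1.symm, h.2.symm⟩
    all_goals first | exact h | exact h.symm | exact ⟨h.1.symm, h.2.symm⟩⟩
  loopless := ⟨fun v h => by
    cases v with
    | core x => exact absurd ((hammingDist_self x).symm.trans h) zero_ne_one
    | spine i => exact h.elim (Nat.succ_ne_self _) (Nat.succ_ne_self _)
    | inner => exact h
    | outer j t =>
      have ne_succ : ∀ t : ZMod 5, t ≠ t + 1 := by decide
      exact h.2.elim (ne_succ t) (ne_succ t)⟩

@[simp]
theorem gadgetGraph_adj {hub : J → Fin R} {v w : GadgetVertex k R J} :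
    (gadgetGraph k hub).Adj v w ↔ AdjRel hub v w := Iff.rfl

/-- The vertex of the core nearest to `v`. -/
@[simp]
def shadow : GadgetVertex k R J → Fin k → Fin 3
  | core x => x
  | _ => 0

/-- The height above the core of the vertex outside the gadgets nearest to `v`. -/
@[simp]
def height (hub : J → Fin R) : GadgetVertex k R J → ℕ
  | core _ => 0
  | spine i => i.val + 1
  | inner j _ => (hub j).val + 1
  | outer j _ => (hub j).val + 1

/-- The distance to the nearest vertex outside the gadgets. -/
@[simp]
def depth : GadgetVertex k R J → ℕ
  | core _ => 0
  | spine _ => 0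
  | inner _ _ => 1
  | outer _ _ => 2

/-- The distance to the core. -/
def elev (hub : J → Fin R) (v : GadgetVertex k R J) : ℕ := height hub v + depth v

/-- The next vertex on the way to the core; vertices of the core are fixed. -/
@[simp]
def down (hub : J → Fin R) : GadgetVertex k R J → GadgetVertex k R J
  | core x => core x
  | spine ⟨0, _⟩ => core 0
  | spine ⟨i + 1, h⟩ => spine ⟨i, i.lt_succ_self.trans h⟩
  | inner j _ => spine (hub j)
  | outer j t => inner j t

variable {hub : J → Fin R} {v w r r' : GadgetVertex k R J}

local notation "Γ" => gadgetGraph k hub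

theorem shadow_eq_zero (h : 0 < height hub v) : shadow v = 0 := by
  cases v with
  | core => exact absurd h (lt_irrefl 0)
  | _ => rfl

theorem eq_core (h : height hub v = 0) : v = core (shadow v) := by
  cases v with
  | core => rfl
  | _ => exact absurd h (Nat.succ_ne_zero _)

theorem eq_spine {i : Fin R} (hd : depth v = 0) (hh : height hub v = i + 1) : v = spine i := by
  cases v with
  | spine => exact congrArg spine (Fin.ext (Nat.succ_injective hh))
  | _ => simp at hd hh

theorem eq_of_shadow_eq (hv : depth v = 0) (hw : depth w = 0) (hh : height hub v = height hub w)
    (hs : shadow v = shadow w) : v = w := by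
  cases v <;> cases w <;> simp_all [Fin.ext_iff]

theorem eq_of_height_eq (hv : depth v = 0) (hw : depth w = 0) (hh : height hub v = height hub w)
    (hpos : 0 < height hub w) : v = w :=
  eq_of_shadow_eq hv hw hh ((shadow_eq_zero (hh ▸ hpos)).trans (shadow_eq_zero hpos).symm)

theorem height_le : height hub v ≤ R := by
  cases v with
  | core => exact Nat.zero_le R
  | spine i => exact i.isLt
  | _ => exact (hub _).isLt

/-! ### Moving down, up, and inside the core -/

theorem elev_down : elev hub (down hub v) = elev hub v - 1 := by
  rcases v with x | ⟨_ | i, hi⟩ | ⟨j, t⟩ | ⟨j, t⟩ <;> rfl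

theorem depth_down : depth (down hub v) = depth v - 1 := by
  rcases v with x | ⟨_ | i, hi⟩ | ⟨j, t⟩ | ⟨j, t⟩ <;> rfl

theorem shadow_down : shadow (down hub v) = shadow v := by
  rcases v with x | ⟨_ | i, hi⟩ | ⟨j, t⟩ | ⟨j, t⟩ <;> rfl

theorem adj_down (h : 0 < elev hub v) : (Γ).Adj v (down hub v) := by
  rcases v with x | ⟨_ | i, hi⟩ | ⟨j, t⟩ | ⟨j, t⟩
  · exact absurd h (lt_irrefl 0)
  all_goals simp

theorem elev_iterate_down (t : ℕ) : elev hub ((down hub)^[t] v) = elev hub v - t := by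
  induction t with
  | zero => rfl
  | succ t ih => rw [Function.iterate_succ_apply', elev_down, ih, Nat.sub_sub]

theorem depth_iterate_down (t : ℕ) : depth ((down hub)^[t] v) = depth v - t := by
  induction t with
  | zero => rfl
  | succ t ih => rw [Function.iterate_succ_apply', depth_down, ih, Nat.sub_sub]

theorem height_iterate_down {t : ℕ} (h : depth v ≤ t) :
    height hub ((down hub)^[t] v) = elev hub v - t := by
  rw [← elev_iterate_down, elev, depth_iterate_down, Nat.sub_eq_zero_of_le h, add_zero]

theorem height_down (h : depth v = 0) : height hub (down hub v) = height hub v - 1 := by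
  have he := elev_down (hub := hub) (v := v)
  have hd := depth_down (hub := hub) (v := v)
  simp only [elev] at he
  omega

theorem exists_adj_up (hv : depth v = 0) (hs : shadow v = 0) (h : height hub v < R) :
    ∃ w, (Γ).Adj v w ∧ height hub w = height hub v + 1 ∧ depth w = 0 := by
  cases v with
  | core x => exact ⟨spine ⟨0, h⟩, ⟨hs, rfl⟩, rfl, rfl⟩
  | spine i => exact ⟨spine ⟨i + 1, h⟩, .inl rfl, rfl, rfl⟩
  | _ => cases hv

theorem exists_adj_core (hh : height hub v = 0) {y : Fin k → Fin 3} (h : shadow v ≠ y) :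
    ∃ w, (Γ).Adj v w ∧ hammingDist (shadow w) y < hammingDist (shadow v) y ∧
      height hub w = 0 ∧ depth w = 0 := by
  obtain ⟨x, hadj, hlt⟩ := exists_hammingDist_lt h
  refine ⟨core x, ?_, hlt, rfl, rfl⟩
  rwa [eq_core hh]

/-! ### Distances in the gadget graph -/

/-- The distance from `v` to a vertex `r` outside the gadgets; one of the two truncated differences
vanishes. -/
def coordDist (hub : J → Fin R) (v r : GadgetVertex k R J) : ℕ :=
  depth v + (height hub v - height hub r) + (height hub r - height hub v) +
    hammingDist (shadow v) (shadow r)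

theorem height_le_of_adj (h : (Γ).Adj v w) : height hub w ≤ height hub v + 1 := by
  cases v <;> cases w <;> simp_all
  omega

theorem hammingDist_shadow_le_one (h : (Γ).Adj v w) : hammingDist (shadow v) (shadow w) ≤ 1 := by
  cases v <;> cases w <;> simp_all

theorem coordDist_le_of_adj (h : (Γ).Adj v w) : coordDist hub v r ≤ coordDist hub w r + 1 := by
  have := hammingDist_triangle (shadow v) (shadow w) (shadow r)
  unfold coordDist
  cases v <;> cases w <;> simp_all <;> omega

theorem coordDist_down_lt (h : 0 < depth v ∨ height hub r < height hub v) :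
    coordDist hub (down hub v) r < coordDist hub v r := by
  have he := elev_down (hub := hub) (v := v)
  have hd := depth_down (hub := hub) (v := v)
  simp only [elev] at he
  simp only [coordDist, shadow_down]
  omega

theorem exists_adj_coordDist_lt (hr : depth r = 0) (h : v ≠ r) :
    ∃ w, (Γ).Adj v w ∧ coordDist hub w r < coordDist hub v r := by
  by_cases hdown : 0 < depth v ∨ height hub r < height hub v
  · exact ⟨down hub v, adj_down (by unfold elev; omega), coordDist_down_lt hdown⟩
  have hv : depth v = 0 := by omega
  by_cases hs : shadow v = shadow r
  · have hlt : height hub v < height hub r :=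
      lt_of_le_of_ne (by omega) fun hh => h (eq_of_shadow_eq hv hr hh hs)
    have hr₀ := shadow_eq_zero (hub := hub) (v := r) (by omega)
    obtain ⟨w, hadj, hw, hwd⟩ := exists_adj_up hv (hs.trans hr₀) (hlt.trans_le height_le)
    have hw₀ := shadow_eq_zero (hub := hub) (v := w) (by omega)
    refine ⟨w, hadj, ?_⟩
    simp only [coordDist, hw₀, hs, hr₀, hammingDist_self]
    omega
  · have hh : height hub v = 0 := by
      by_contra hne
      exact hs (by rw [shadow_eq_zero (hub := hub) (v := v) (by omega),
        shadow_eq_zero (hub := hub) (v := r) (by omega)])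
    obtain ⟨w, hadj, hlt, hw, hwd⟩ := exists_adj_core hh hs
    refine ⟨w, hadj, ?_⟩
    simp only [coordDist]
    omega

theorem reachable_and_dist_eq (hr : depth r = 0) :
    (Γ).Reachable v r ∧ (Γ).dist v r = coordDist hub v r :=
  reachable_and_dist_eq_of_descent
    (by simp only [coordDist, hr, Nat.sub_self, hammingDist_self])
    (fun _ _ => coordDist_le_of_adj) (fun _ => exists_adj_coordDist_lt hr) v

theorem dist_eq (hr : depth r = 0) : (Γ).dist v r = coordDist hub v r :=
  (reachable_and_dist_eq hr).2

theorem connected_gadgetGraph : (Γ).Connected :=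
  have : Nonempty (GadgetVertex k R J) := ⟨core 0⟩
  .mk fun _ _ => (reachable_and_dist_eq (r := core 0) rfl).1.trans
    (reachable_and_dist_eq (r := core 0) rfl).1.symm

theorem dist_down_lt (hr : depth r = 0) (h : 0 < depth v ∨ height hub r < height hub v) :
    (Γ).dist (down hub v) r < (Γ).dist v r := by
  rw [dist_eq hr, dist_eq hr]
  exact coordDist_down_lt h

/-! ### Moves of the evader -/

theorem height_le_of_lazyAdj (h : LazyAdj Γ r r') : height hub r' ≤ height hub r + 1 := by
  obtain rfl | h := h
  · exact Nat.le_succ _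
  · exact height_le_of_adj h

theorem hammingDist_shadow_le_one_of_lazyAdj (h : LazyAdj Γ r r') :
    hammingDist (shadow r) (shadow r') ≤ 1 := by
  obtain rfl | h := h
  · rw [hammingDist_self]
    exact zero_le_one
  · exact hammingDist_shadow_le_one h

theorem shadow_eq_zero_of_lazyAdj (h : LazyAdj Γ r r') (hr : 0 < height hub r) : shadow r' = 0 := by
  obtain rfl | h := h
  · exact shadow_eq_zero hr
  · cases r <;> cases r' <;> simp_all

theorem depth_eq_zero_of_height_ne (h : LazyAdj Γ r r') (hh : height hub r ≠ height hub r') :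
    depth r = 0 ∧ depth r' = 0 := by
  obtain rfl | h := h
  · exact absurd rfl hh
  · cases r <;> cases r' <;> simp_all

theorem depth_eq_zero_of_lazyAdj (h : LazyAdj Γ r r') (hr : depth r = 0)
    (hhub : ∀ j, height hub r ≠ hub j + 1) : depth r' = 0 := by
  obtain rfl | h := h
  · exact hr
  · cases r <;> cases r'
    case spine.inner j _ =>
      exact absurd (congrArg (fun i : Fin R => i.val + 1) (Eq.symm h)) (hhub j)
    all_goals simp_all

/-! ### Fewer than `k` cops lose -/

theorem shadow_ne_of_lazyAdj_core {y y' : Fin k → Fin 3} (hv : v ≠ core y)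
    (hyy' : hammingDist y y' = 1) (h : LazyAdj Γ (core y') v) : shadow v ≠ y := by
  rintro rfl
  obtain rfl | h := h
  · exact hv rfl
  · cases v <;> simp_all

theorem exists_core_escape {n : ℕ} (hn : n < k) (c : Fin n → GadgetVertex k R J) {y : Fin k → Fin 3}
    (h : ∀ i, c i ≠ core y) :
    ∃ y', hammingDist y y' = 1 ∧ ∀ i, ¬ LazyAdj Γ (core y') (c i) := by
  have : NeZero k := ⟨by omega⟩
  obtain ⟨z, hz⟩ := exists_ne y
  obtain ⟨y', hyy', hy'⟩ := exists_hammingDist_eq_one_forall_one_lt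
    (x := fun i => if shadow (c i) = y then z else shadow (c i)) (y := y)
    (by simp) (by simpa using hn) (fun i => by split_ifs with hi; exacts [hz, hi])
  refine ⟨y', hyy', fun i hi => ?_⟩
  have hfar := hy' i
  rw [if_neg (shadow_ne_of_lazyAdj_core (h i) hyy' hi)] at hfar
  obtain hi | hi := hi
  · rw [hi, shadow, hammingDist_self] at hfar
    omega
  · exact absurd (hammingDist_shadow_le_one hi.symm) (not_le.2 hfar)

theorem exists_forall_ne_core {n : ℕ} (hn : n < k) (c : Fin n → GadgetVertex k R J) :
    ∃ y, ∀ i, c i ≠ core y := by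
  by_contra! h
  have hsurj : Function.Surjective fun i => shadow (c i) := fun y =>
    (h y).imp fun i hi => congrArg shadow hi
  have hcard := Fintype.card_le_of_surjective _ hsurj
  rw [Fintype.card_fun, Fintype.card_fin, Fintype.card_fin, Fintype.card_fin] at hcard
  exact absurd (hn.trans (Nat.lt_pow_self (by norm_num))) (not_lt.2 hcard)

theorem not_copsWinWith {n : ℕ} (hn : n < k) : ¬ CopsWinWith Γ n := by
  have not_captured (c c' : Fin n → GadgetVertex k R J) (y : Fin k → Fin 3)
      (h : ∀ i, ¬ LazyAdj Γ (core y) (c i)) (hs : CopStep Γ c (core y) c') (i : Fin n) :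
      c' i ≠ core y :=
    fun hi => h i (hi ▸ hs i).symm
  have invariant : EvasionInvariant Γ (CopStep Γ) fun (c : Fin n → GadgetVertex k R J) r =>
      ∃ y, r = core y ∧ ∀ i, ¬ LazyAdj Γ (core y) (c i) := by
    refine ⟨?_, ?_, ?_⟩
    · rintro c r ⟨y, rfl, h⟩ i hi
      exact h i (.inl hi)
    · rintro c r c' ⟨y, rfl, h⟩ hs
      exact not_captured c c' y h hs
    · rintro c r c' ⟨y, rfl, h⟩ hs
      obtain ⟨y', hyy', hy'⟩ := exists_core_escape hn c' (not_captured c c' y h hs)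
      exact ⟨core y', .inr hyy', y', rfl, hy'⟩
  refine invariant.not_copsWinWith fun c => ?_
  obtain ⟨y, hy⟩ := exists_forall_ne_core hn c
  obtain ⟨y', -, hy'⟩ := exists_core_escape hn c hy
  exact ⟨core y', y', rfl, hy'⟩

/-! ### `k` cops win -/

theorem copsWin_hub (j : J) (hr : (∃ t, r = inner j t) ∨ ∃ t, r = outer j t) :
    CopsWin Γ (fun _ : ZMod 5 => spine (hub j)) r := by
  have enter (r : GadgetVertex k R J) :
      CopStep Γ (fun _ : ZMod 5 => spine (hub j)) r (inner j) := fun _ => .inr rfl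
  obtain ⟨t, rfl⟩ | ⟨t, rfl⟩ := hr
  · exact .capture (enter _) t rfl
  refine .move (enter _) fun r' hr' => ?_
  have hcases : r' = inner j t ∨ ∃ t', r' = outer j t' := by
    obtain rfl | hr' := hr'
    · exact .inr ⟨t, rfl⟩
    · cases r' <;> simp_all
  obtain rfl | ⟨t', rfl⟩ := hcases
  · exact .caught t rfl
  refine .capture (c' := Function.update (inner j) t' (outer j t')) (fun t => ?_) t'
    (Function.update_self ..)
  obtain rfl | ht := eq_or_ne t t'
  · rw [Function.update_self]
    exact .inr ⟨rfl, rfl⟩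
  · exact .inl (Function.update_of_ne ht _ _)

theorem copsWin_of_height_eq (hk : 5 ≤ k) (hv : depth v = 0) (hh : height hub v = height hub r)
    (hr : 0 < depth r) : CopsWin Γ (fun _ : Fin k => v) r := by
  have hgadget : ∃ j, height hub r = hub j + 1 ∧ ((∃ t, r = inner j t) ∨ ∃ t, r = outer j t) := by
    cases r <;> simp_all
  obtain ⟨j, hj, hr⟩ := hgadget
  rw [eq_spine hv (hh.trans hj)]
  exact .of_comp (Fin.castLE_injective hk) (copsWin_hub j hr)

theorem copsWin_of_height_lt (hk : 5 ≤ k) (hv : depth v = 0) (hs : shadow v = 0)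
    (hr : height hub v < height hub r) : CopsWin Γ (fun _ : Fin k => v) r := by
  induction hm : R - height hub v generalizing v r with
  | zero =>
    have := height_le (hub := hub) (v := r)
    omega
  | succ m ih =>
    obtain ⟨w, hadj, hw, hwd⟩ := exists_adj_up hv hs (hr.trans_le height_le)
    refine .move_or_capture (c' := fun _ => w) (fun _ => .inr hadj) fun hne r' hr' => ?_
    have hwr' : height hub w ≤ height hub r' := by
      by_contra hlt
      have := height_le_of_lazyAdj hr'.symm
      exact hne ⟨0, by omega⟩ (eq_of_height_eq (hub := hub) hwd
        (depth_eq_zero_of_height_ne hr' (by omega)).1 (by omega) (by omega))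
    obtain hlt | heq := hwr'.lt_or_eq
    · exact ih hwd (shadow_eq_zero (hub := hub) (by omega)) hlt (by omega)
    obtain hr'd | hr'd := Nat.eq_zero_or_pos (depth r')
    · exact .caught ⟨0, by omega⟩ (eq_of_height_eq (hub := hub) hwd hr'd heq (by omega))
    · exact copsWin_of_height_eq hk hwd heq hr'd

theorem copsWin_of_guard (hk : 5 ≤ k) {x : Fin k → Fin k → Fin 3} {a : Fin k} (ha : x a = 0)
    (hr : 0 < height hub r) : CopsWin Γ (fun i => core (x i)) r := by
  obtain ⟨m, hm⟩ : ∃ m, ∀ i, hammingDist (x i) 0 ≤ m :=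
    ⟨_, fun _ => hammingDist_le_card_fintype⟩
  induction m generalizing x r with
  | zero =>
    have hx : x = fun _ => 0 := funext fun i => hammingDist_eq_zero.1 (Nat.le_zero.1 (hm i))
    rw [hx]
    exact copsWin_of_height_lt hk rfl rfl hr
  | succ m ih =>
    have hcloser (i : Fin k) : ∃ y, LazyAdj Γ (core (x i)) (core y) ∧ hammingDist y 0 ≤ m ∧
        (x i = 0 → y = 0) := by
      by_cases hi : x i = 0
      · exact ⟨0, .inl (by rw [hi]), by simp, fun _ => rfl⟩
      · obtain ⟨y, hadj, hlt⟩ := exists_hammingDist_lt hi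
        exact ⟨y, .inr hadj, by have := hm i; omega, fun h => absurd h hi⟩
    choose x' hstep hm' hx' using hcloser
    refine .move (c' := fun i => core (x' i)) hstep fun r' hr' => ?_
    obtain hr'₀ | hr'₀ := Nat.eq_zero_or_pos (height hub r')
    · refine .caught a ?_
      rw [eq_core hr'₀, shadow_eq_zero_of_lazyAdj hr' hr, hx' a ha]
    · exact ih (hx' a ha) hr'₀ hm'

theorem copsWin_of_shadow_eq (hk : 5 ≤ k) {x : Fin k → Fin k → Fin 3} {a : Fin k}
    (ha : x a = shadow r) : CopsWin Γ (fun i => core (x i)) r := by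
  obtain hr | hr := Nat.eq_zero_or_pos (height hub r)
  · refine .caught a ?_
    rw [ha, ← eq_core hr]
  · exact copsWin_of_guard hk (ha.trans (shadow_eq_zero hr)) hr

theorem copsWin_core (hk : 5 ≤ k) (x : Fin k → Fin k → Fin 3) (r : GadgetVertex k R J) :
    CopsWin Γ (fun i => core (x i)) r := by
  have : NeZero k := ⟨by omega⟩
  induction hm : chasePotential x (shadow r) using Nat.strong_induction_on generalizing x r with
  | _ m ih =>
    by_cases hx : ∃ i, x i = shadow r
    · exact copsWin_of_shadow_eq hk hx.choose_spec
    obtain ⟨x', hx', hcapture | hdecr⟩ := exists_capture_or_chasePotential_lt (not_exists.1 hx)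
    all_goals
      have hstep : CopStep Γ (fun i => core (x i)) r fun i => core (x' i) := fun i =>
        .inr (hx' i).1
      refine .move_or_capture hstep fun hne r' hr' => ?_
    · obtain ⟨i, hi⟩ := hcapture
      have hr : 0 < height hub r := by
        refine Nat.pos_of_ne_zero fun hr => hne i ?_
        rw [hi, ← eq_core hr]
      exact copsWin_of_shadow_eq hk (a := i)
        (by rw [hi, shadow_eq_zero hr, shadow_eq_zero_of_lazyAdj hr' hr])
    · exact ih _ (hm ▸ hdecr _ (hammingDist_shadow_le_one_of_lazyAdj hr')) _ _ rfl

theorem copsWinWith (hk : 5 ≤ k) : CopsWinWith Γ k :=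
  _root_.copsWinWith (c := fun _ => core 0) (copsWin_core hk fun _ => 0)

/-! ### Fewer than two zombies per gadget lose -/

/-- The gadget containing a vertex, if any. -/
def gadget : GadgetVertex k R J → Option J
  | inner j _ => some j
  | outer j _ => some j
  | _ => none

/-- The possible positions `v` of a zombie harmless to a survivor who runs round the ring of gadget
`j` and is now at `outer j s`: outside the gadget, or just behind. -/
def Trails (j : J) (s : ZMod 5) (v : GadgetVertex k R J) : Prop :=
  gadget v ≠ some j ∨ v = inner j (s - 1) ∨ v = outer j (s - 2)

theorem Trails.ne {j : J} {s : ZMod 5} (h : Trails j s v) : v ≠ outer j s := by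
  have hs : ∀ s : ZMod 5, s ≠ s - 2 := by decide
  rintro rfl
  exact h.elim (· rfl) fun h => h.elim nofun fun h => hs s (outer.inj h).2

theorem Trails.ne_of_succ {j : J} {s : ZMod 5} (h : Trails j (s + 1) v) : v ≠ outer j s := by
  have hs : ∀ s : ZMod 5, s ≠ s + 1 - 2 := by decide
  rintro rfl
  exact h.elim (· rfl) fun h => h.elim nofun fun h => hs s (outer.inj h).2

theorem Trails.succ {j : J} {s : ZMod 5} (h : Trails j s v) (hadj : (Γ).Adj v w)
    (hlt : (Γ).dist w (outer j s) < (Γ).dist v (outer j s)) : Trails j (s + 1) w := by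
  have near (u : GadgetVertex k R J) (hu : (Γ).Adj v u) (hur : (Γ).Adj u (outer j s)) :
      LazyAdj Γ (outer j s) w := lazyAdj_of_dist_lt connected_gadgetGraph hlt hu hur
  obtain h | rfl | rfl := h
  · by_cases hw : gadget w = some j
    · obtain rfl : v = spine (hub j) := by
        cases v <;> cases w <;> simp_all [gadget]
      cases near (inner j s) rfl ⟨rfl, rfl⟩ <;> cases w <;> simp_all [Trails]
    · exact .inl hw
  · have hs : ∀ s : ZMod 5, s - 1 = s + 1 - 2 := by decide
    cases near (outer j (s - 1)) ⟨rfl, rfl⟩ ⟨rfl, by simp⟩ <;> cases w <;> simp_all [Trails]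
  · have hs : ∀ s : ZMod 5, s ≠ s - 2 := by decide
    have hring : ∀ s t : ZMod 5, (t = s - 2 + 1 ∨ s - 2 = t + 1) →
        (t = s ∨ t = s + 1 ∨ s = t + 1) → t = s + 1 - 2 := by decide
    have hnear := near (outer j (s - 1)) ⟨rfl, .inl (by ring)⟩ ⟨rfl, by simp⟩
    rcases w with x | i | ⟨j', t⟩ | ⟨j', t⟩
    · exact hadj.elim
    · exact hadj.elim
    · obtain hnear | hnear := hnear
      · cases hnear
      · exact absurd (hnear.2.trans hadj.2.symm) (hs s)
    · obtain ⟨rfl, ht⟩ := hadj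
      refine .inr (.inr (congrArg _ (hring s t ht ?_)))
      exact hnear.imp (fun h => (outer.inj h).2) And.right

theorem exists_forall_trails {n : ℕ} [Fintype J] (hn : n < 2 * Fintype.card J)
    (c : Fin n → GadgetVertex k R J) : ∃ j s, ∀ i, Trails j s (c i) := by
  classical
  obtain ⟨o, ho, hcard⟩ := Finset.exists_card_fiber_lt_of_card_lt_mul
    (s := Finset.univ) (t := Finset.univ.map Function.Embedding.some)
    (f := fun i => gadget (c i)) (n := 2) (by simpa [mul_comm] using hn)
  obtain ⟨j, -, rfl⟩ := Finset.mem_map.1 ho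
  have hunique (i i' : Fin n) (hi : gadget (c i) = some j) (hi' : gadget (c i') = some j) :
      i = i' :=
    Finset.card_le_one.1 (Nat.le_of_lt_succ hcard) i (by simpa using hi) i' (by simpa using hi')
  by_cases hex : ∃ i, gadget (c i) = some j
  · obtain ⟨i, hi⟩ := hex
    obtain ⟨s, hs⟩ : ∃ s, Trails j s (c i) := by
      cases hv : c i with
      | inner j' t =>
        rw [hv] at hi
        obtain rfl := Option.some.inj hi
        exact ⟨t + 1, .inr (.inl (by rw [add_sub_cancel_right]))⟩
      | outer j' t =>
        rw [hv] at hi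
        obtain rfl := Option.some.inj hi
        exact ⟨t + 2, .inr (.inr (by rw [add_sub_cancel_right]))⟩
      | _ => exact ⟨0, .inl (by simp [gadget])⟩
    refine ⟨j, s, fun i' => ?_⟩
    by_cases hi' : gadget (c i') = some j
    · exact hunique i' i hi' hi ▸ hs
    · exact .inl hi'
  · exact ⟨j, 0, fun i => .inl (not_exists.1 hex i)⟩

theorem not_zombiesWinWith {n : ℕ} [Fintype J] (hn : n < 2 * Fintype.card J) :
    ¬ ZombiesWinWith Γ n := by
  have invariant : EvasionInvariant Γ (ZombieStep Γ) fun (c : Fin n → GadgetVertex k R J) r =>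
      ∃ j s, r = outer j s ∧ ∀ i, Trails j s (c i) := by
    refine ⟨?_, ?_, ?_⟩
    · rintro c r ⟨j, s, rfl, h⟩ i
      exact (h i).ne
    · rintro c r c' ⟨j, s, rfl, h⟩ hs i
      exact ((h i).succ (hs i).1 (hs i).2).ne_of_succ
    · rintro c r c' ⟨j, s, rfl, h⟩ hs
      exact ⟨outer j (s + 1), .inr ⟨rfl, .inl rfl⟩, j, s + 1, rfl,
        fun i => (h i).succ (hs i).1 (hs i).2⟩
  refine invariant.not_zombiesWinWith fun c => ?_
  obtain ⟨j, s, h⟩ := exists_forall_trails hn c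
  exact ⟨outer j s, j, s, rfl, h⟩

/-! ### Two zombies per gadget win: the survivor starts in a gadget -/

theorem zombiesWin_inner {j : J} {s t : ZMod 5} (ht : t ≠ 0)
    (hs : (Γ).Adj (outer j 2) (outer j s))
    (hlt : (Γ).dist (outer j s) (inner j t) < (Γ).dist (outer j 2) (inner j t))
    (hts : LazyAdj Γ (outer j t) (outer j s)) :
    ZombiesWin Γ ![inner j 0, outer j 2] (inner j t) := by
  have hspoke : (Γ).dist (spine (hub j)) (inner j t) < (Γ).dist (inner j 0) (inner j t) :=
    dist_lt_of_adj connected_gadgetGraph (by simpa [LazyAdj] using ht.symm) rfl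
  refine .move (c' := ![spine (hub j), outer j s])
    (Fin.forall_fin_two.2 ⟨⟨rfl, hspoke⟩, hs, hlt⟩) fun r' hr' => ?_
  obtain ⟨i, hi⟩ : ∃ i : Fin 2, LazyAdj Γ r' (![spine (hub j), outer j s] i) := by
    rw [Fin.exists_fin_two]
    obtain rfl | hr' := hr'
    · exact .inl (.inr rfl)
    rcases r' with x | i | ⟨j', t'⟩ | ⟨j', t'⟩
    · exact hr'.elim
    · exact .inl (.inl (congrArg _ hr'))
    · exact hr'.elim
    · obtain ⟨rfl, rfl⟩ := hr'
      exact .inr hts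
  exact ZombiesWin.of_lazyAdj connected_gadgetGraph i hi

theorem zombiesWin_inner_of_pair (j : J) (t : ZMod 5) :
    ZombiesWin Γ ![inner j 0, outer j 2] (inner j t) := by
  have hG : (Γ).Connected := connected_gadgetGraph
  fin_cases t
  · exact .caught 0 rfl
  · refine zombiesWin_inner (s := 1) (t := 1) (by decide) ⟨rfl, .inr rfl⟩
      (dist_lt_of_adj hG ?_ ⟨rfl, rfl⟩) (.inl rfl)
    simp +decide [LazyAdj]
  · exact ZombiesWin.of_lazyAdj hG 1 (.inr ⟨rfl, rfl⟩)
  · refine zombiesWin_inner (s := 3) (t := 3) (by decide) ⟨rfl, .inl rfl⟩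
      (dist_lt_of_adj hG ?_ ⟨rfl, rfl⟩) (.inl rfl)
    simp +decide [LazyAdj]
  · refine zombiesWin_inner (s := 3) (t := 4) (by decide) ⟨rfl, .inl rfl⟩
      (dist_lt_of_adj_of_adj hG ?_ ?_ (w := outer j 4) ⟨rfl, .inl rfl⟩ ⟨rfl, rfl⟩)
      (.inr ⟨rfl, .inr rfl⟩)
    · simp +decide [LazyAdj]
    · intro u hu hu'
      cases u <;> simp_all +decide

theorem zombiesWin_outer_four {j j' : J} (hj : j' ≠ j) (hhub : hub j' = hub j) :
    ZombiesWin Γ ![inner j 0, outer j 2, inner j' 0] (outer j 4) := by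
  have hG : (Γ).Connected := connected_gadgetGraph
  refine .move (c' := ![outer j 0, outer j 3, spine (hub j)]) ?_ fun r' hr' => ?_
  · rw [ZombieStep, Fin.forall_fin_succ, Fin.forall_fin_two]
    refine ⟨⟨⟨rfl, rfl⟩, dist_lt_of_adj hG ?_ ⟨rfl, .inr rfl⟩⟩,
      ⟨⟨rfl, .inl rfl⟩, dist_lt_of_adj hG ?_ ⟨rfl, .inl rfl⟩⟩,
      hhub, dist_lt_of_adj_of_adj hG ?_ ?_ (w := inner j 4) rfl ⟨rfl, rfl⟩⟩
    · simp +decide [LazyAdj]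
    · simp +decide [LazyAdj]
    · simp [LazyAdj, hj.symm]
    · intro u hu hu'
      cases u <;> simp_all
  obtain rfl | hr' := hr'
  · exact ZombiesWin.of_lazyAdj hG 0 (.inr ⟨rfl, .inl rfl⟩)
  rcases r' with x | i | ⟨j', t⟩ | ⟨j', t⟩
  · exact hr'.elim
  · exact hr'.elim
  · obtain ⟨rfl, rfl⟩ := hr'
    exact ZombiesWin.of_lazyAdj hG 2 (.inr rfl)
  · obtain ⟨rfl, ht⟩ := hr'
    have hring : ∀ t : ZMod 5, t = 4 + 1 ∨ 4 = t + 1 → t = 0 ∨ t = 3 := by decide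
    obtain rfl | rfl := hring t ht
    · exact .caught 0 rfl
    · exact .caught 1 rfl

theorem zombiesWin_gadget {j j' : J} (hj : j' ≠ j) (hhub : hub j' = hub j)
    (hr : (∃ t, r = inner j t) ∨ ∃ t, r = outer j t) :
    ZombiesWin Γ ![inner j 0, outer j 2, inner j' 0] r := by
  have hG : (Γ).Connected := connected_gadgetGraph
  obtain ⟨t, rfl⟩ | ⟨t, rfl⟩ := hr
  · refine ZombiesWin.of_comp hG (Fin.castLE_injective (Nat.le_succ 2)) ?_
    convert zombiesWin_inner_of_pair j t using 1
    exact funext (Fin.forall_fin_two.2 ⟨rfl, rfl⟩)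
  fin_cases t
  · exact ZombiesWin.of_lazyAdj hG 0 (.inr ⟨rfl, rfl⟩)
  · exact ZombiesWin.of_lazyAdj hG 1 (.inr ⟨rfl, .inl rfl⟩)
  · exact .caught 1 rfl
  · exact ZombiesWin.of_lazyAdj hG 1 (.inr ⟨rfl, .inr rfl⟩)
  · exact zombiesWin_outer_four hj hhub

/-! ### Two zombies per gadget win: the survivor starts outside the gadgets -/

theorem exists_adj_up_dist_lt (hv : depth v = 0) (hr : depth r = 0) (hs : shadow v = 0)
    (h : height hub v < height hub r) :
    ∃ w, (Γ).Adj v w ∧ (Γ).dist w r < (Γ).dist v r ∧ height hub w = height hub v + 1 ∧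
      depth w = 0 := by
  obtain ⟨w, hadj, hw, hwd⟩ := exists_adj_up hv hs (h.trans_le height_le)
  refine ⟨w, hadj, ?_, hw, hwd⟩
  rw [dist_eq hr, dist_eq hr, coordDist, coordDist, hs,
    shadow_eq_zero (hub := hub) (v := w) (by omega)]
  omega

theorem exists_adj_core_dist_lt (hv : depth v = 0) (hr : depth r = 0) (hh : height hub v = 0)
    (hs : shadow v ≠ shadow r) :
    ∃ w, (Γ).Adj v w ∧ (Γ).dist w r < (Γ).dist v r ∧ height hub w = 0 ∧ depth w = 0 := by
  obtain ⟨w, hadj, hlt, hw, hwd⟩ := exists_adj_core hh hs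
  refine ⟨w, hadj, ?_, hw, hwd⟩
  rw [dist_eq hr, dist_eq hr, coordDist, coordDist]
  omega

theorem zombiesWin_between {u v r : GadgetVertex k R J} (hu : depth u = 0)
    (hv : depth v = 0) (hr : depth r = 0) (hus : shadow u = 0)
    (hrs : shadow r = 0) (hur : height hub u ≤ height hub r)
    (hrv : height hub r ≤ height hub v)
    (hhub : ∀ j, hub j + 1 ≤ height hub u ∨ height hub v ≤ hub j + 1) :
    ZombiesWin Γ ![u, v] r := by
  obtain hur | hur := hur.eq_or_lt
  · exact .caught 0 (eq_of_shadow_eq hu hr hur (hus.trans hrs.symm))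
  obtain hrv | hrv := hrv.eq_or_lt
  · exact .caught 1 (eq_of_height_eq hv hr hrv.symm (by omega))
  obtain ⟨w, hadj, hlt, hw, hwd⟩ := exists_adj_up_dist_lt hu hr hus hur
  have hdown := height_down (hub := hub) hv
  have hdownd : depth (down hub v) = 0 := by rw [depth_down, hv]
  have hvdown : (Γ).Adj v (down hub v) := adj_down (by unfold elev; omega)
  refine .move_or_capture (c' := ![w, down hub v]) (Fin.forall_fin_two.2
    ⟨⟨hadj, hlt⟩, hvdown, dist_down_lt hr (.inr hrv)⟩) fun hne r' hr' => ?_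
  have hwr : height hub w ≠ height hub r := fun h =>
    hne 0 (eq_of_height_eq hwd hr h (by omega))
  have hrv' : height hub (down hub v) ≠ height hub r := fun h =>
    hne 1 (eq_of_height_eq hdownd hr h (by omega))
  have hup := height_le_of_lazyAdj (hub := hub) hr'
  have hlow := height_le_of_lazyAdj (hub := hub) hr'.symm
  exact zombiesWin_between hwd hdownd
    (depth_eq_zero_of_lazyAdj hr' hr fun j => by specialize hhub j; omega)
    (shadow_eq_zero (hub := hub) (by omega))
    (shadow_eq_zero_of_lazyAdj (hub := hub) hr' (by omega))
    (by omega) (by omega) fun j => by specialize hhub j; omega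
termination_by height hub v
decreasing_by omega

section Block

variable {ι : Type*} {c c' : ι → GadgetVertex k R J} {a b : ι}

/-- A zombie on the spine below all hubs confines the survivor to the part of the graph below it. -/
theorem zombiesWin_of_block (hs : ZombieStep Γ c r c') (hr : depth r = 0) (hb : depth (c' b) = 0)
    (hpos : 0 < height hub (c' b)) (hrb : height hub r ≤ height hub (c' b))
    (hhub : ∀ j, height hub (c' b) ≤ hub j + 1)
    (h : (∀ i, c' i ≠ r) → ∀ r', LazyAdj Γ r r' → depth r' = 0 →
      height hub r' < height hub (c' b) → ZombiesWin Γ c' r') :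
    ZombiesWin Γ c r := by
  refine .move_or_capture hs fun hne r' hr' => ?_
  have hlt : height hub r < height hub (c' b) :=
    hrb.lt_of_ne fun heq => hne b (eq_of_height_eq hb hr heq.symm (heq ▸ hpos))
  have hr'd : depth r' = 0 := depth_eq_zero_of_lazyAdj hr' hr fun j => (hlt.trans_le (hhub j)).ne
  obtain heq | hlt' := ((height_le_of_lazyAdj hr').trans hlt).eq_or_lt
  · exact .caught b (eq_of_height_eq hb hr'd heq.symm (heq ▸ hpos))
  · exact h hne r' hr' hr'd hlt'

theorem zombiesWin_of_shadow_eq (ha : depth (c a) = 0) (hb : depth (c b) = 0) (hr : depth r = 0)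
    (hs : shadow (c a) = shadow r) (har : height hub (c a) ≤ height hub r)
    (hrb : height hub r < height hub (c b)) (hhub : ∀ j, height hub (c b) ≤ hub j + 1) :
    ZombiesWin Γ c r := by
  by_cases hr₀ : height hub r = 0
  · exact .caught a (eq_of_shadow_eq (hub := hub) ha hr (by omega) hs)
  have hrs : shadow r = 0 := shadow_eq_zero (Nat.pos_of_ne_zero hr₀)
  have hab : a ≠ b := by
    rintro rfl
    omega
  refine ZombiesWin.of_comp connected_gadgetGraph (f := ![a, b]) ?_ ?_
  · simpa [Function.Injective, Fin.forall_fin_two, eq_comm] using hab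
  · convert zombiesWin_between ha hb hr (hs.trans hrs) hrs har hrb.le fun j => .inr (hhub j) using 1
    exact funext (Fin.forall_fin_two.2 ⟨rfl, rfl⟩)

theorem zombiesWin_of_iterate_down (hb : depth (c b) ≤ 1)
    (hhub : ∀ j, height hub (c b) ≤ hub j + 1) (hc : ∀ i, elev hub (c b) ≤ elev hub (c i))
    (hr : depth r = 0) (hrb : height hub r < height hub (c b)) (t : ℕ) (ht : t < elev hub (c b))
    (h : ∀ r', depth r' = 0 → height hub r' < elev hub (c b) - t →
      ZombiesWin Γ ((down hub)^[t] ∘ c) r') :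
    ZombiesWin Γ c r := by
  have helev (v : GadgetVertex k R J) := elev_down (hub := hub) (v := v)
  have hdepth (v : GadgetVertex k R J) := depth_down (hub := hub) (v := v)
  induction t generalizing c r with
  | zero => exact h r hr (by unfold elev; omega)
  | succ t ih =>
    have hb₀ : depth (down hub (c b)) = 0 := by rw [hdepth]; omega
    have hbh : height hub (down hub (c b)) = elev hub (c b) - 1 := by
      rw [← helev, elev, hb₀, add_zero]
    have hle : height hub (down hub (c b)) ≤ height hub (c b) := by
      rw [hbh, elev]
      omega
    refine zombiesWin_of_block (c' := down hub ∘ c) (b := b)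
      (fun i => ⟨adj_down (by have := hc i; omega), dist_down_lt hr ?_⟩) hr hb₀
      (by simp only [Function.comp_apply]; omega) ?_ (fun j => hle.trans (hhub j))
      fun _ r' _ hr'd hr'b => ?_
    · have := hc i
      unfold elev at this
      omega
    · simp only [Function.comp_apply, hbh, elev]
      omega
    · refine ih (c := down hub ∘ c) (hb₀.trans_le zero_le_one) (fun j => hle.trans (hhub j))
        (fun i => ?_) hr'd hr'b ?_ fun r'' hr''d hr'' => h r'' hr''d ?_
      · have := hc i
        simp only [Function.comp_apply, helev]
        omega
      · simp only [Function.comp_apply, helev]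
        omega
      · simp only [Function.comp_apply, helev] at hr''
        omega

end Block

/-! ### A guard and a pack -/

section Pack

variable {c : Option (Fin k) → GadgetVertex k R J}

theorem zombiesWin_of_guard {u : Fin k → GadgetVertex k R J} (hc : depth (c none) = 0)
    (hr : depth r = 0) (hpos : 1 < height hub (c none))
    (hrc : height hub r < height hub (c none)) (hhub : ∀ j, height hub (c none) ≤ hub j + 1)
    (hu : ∀ i, (Γ).Adj (c (some i)) (u i) ∧ (Γ).dist (u i) r < (Γ).dist (c (some i)) r)
    (h : (∀ i, u i ≠ r) → ∀ r', LazyAdj Γ r r' → depth r' = 0 →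
      height hub r' < height hub (down hub (c none)) →
      ZombiesWin Γ (fun o : Option (Fin k) => o.elim (down hub (c none)) u) r') :
    ZombiesWin Γ c r := by
  have hdown := height_down (hub := hub) hc
  refine zombiesWin_of_block (b := none)
    (c' := fun o : Option (Fin k) => o.elim (down hub (c none)) u)
    (Option.forall.2 ⟨⟨adj_down (by unfold elev; omega), dist_down_lt hr (.inr hrc)⟩, hu⟩) hr
    (by simp only [Option.elim_none, depth_down, hc])
    (by simp only [Option.elim_none]; omega) (by simp only [Option.elim_none]; omega)
    (fun j => ?_) fun hne => h fun i => hne (some i)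
  have := hhub j
  simp only [Option.elim_none]
  omega

theorem zombiesWin_of_pack_in_core {c : Option (Fin k) → GadgetVertex k R J}
    {r : GadgetVertex k R J} (hc : ∀ o, depth (c o) = 0)
    (hcore : ∀ i, height hub (c (some i)) = 0) (hr : depth r = 0)
    (hrc : height hub r < height hub (c none)) (hhub : ∀ j, height hub (c none) ≤ hub j + 1)
    (htime : chasePotential (fun i => shadow (c (some i))) (shadow r) + 1 <
      height hub (c none)) (hk : 0 < k) :
    ZombiesWin Γ c r := by
  have : Nonempty (Fin k) := ⟨⟨0, hk⟩⟩
  have hdown := height_down (hub := hub) (hc none)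
  have hhub' (j : J) : height hub (down hub (c none)) ≤ hub j + 1 := by
    have := hhub j
    omega
  by_cases hs : ∃ i, shadow (c (some i)) = shadow r
  · obtain ⟨i, hs⟩ := hs
    exact zombiesWin_of_shadow_eq (hc (some i)) (hc none) hr hs (by rw [hcore]; omega) hrc hhub
  obtain ⟨x, hx, hcapture⟩ := exists_capture_or_chasePotential_lt (not_exists.1 hs)
  have hnew : ∀ o : Option (Fin k),
      depth (o.elim (down hub (c none)) fun i => core (R := R) (J := J) (x i)) = 0 :=
    Option.forall.2 ⟨by simp only [Option.elim_none, depth_down, hc], fun _ => rfl⟩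
  refine zombiesWin_of_guard (u := fun i => core (x i)) (hc none) hr (by omega) hrc hhub
    (fun i => ⟨?_, ?_⟩) fun hne r' hr' hr'd hr'c => ?_
  · rw [eq_core (hcore i)]
    exact (hx i).1
  · have := (hx i).2
    rw [dist_eq hr, dist_eq hr, coordDist, coordDist, hc, hcore]
    simpa using this
  obtain ⟨i, hi⟩ | hlt := hcapture
  · have hr₀ : 0 < height hub r := Nat.pos_of_ne_zero fun h => hne i (by rw [eq_core h, hi])
    exact zombiesWin_of_shadow_eq (a := some i) (b := none) (hnew _) (hnew _) hr'd
      (hi.trans ((shadow_eq_zero hr₀).trans (shadow_eq_zero_of_lazyAdj hr' hr₀).symm))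
      (Nat.zero_le _) hr'c hhub'
  · refine zombiesWin_of_pack_in_core hnew (fun _ => rfl) hr'd hr'c hhub' ?_ hk
    have := hlt (shadow r') (hammingDist_shadow_le_one_of_lazyAdj hr')
    change chasePotential x (shadow r') + 1 < height hub (down hub (c none))
    omega
termination_by height hub (c none)
decreasing_by
  simp only [Option.elim_none]
  omega

theorem zombiesWin_of_pack (H : ℕ) (hc : ∀ o, depth (c o) = 0)
    (hH : ∀ i, height hub (c (some i)) ≤ H) (hr : depth r = 0)
    (hrc : height hub r < height hub (c none)) (hhub : ∀ j, height hub (c none) ≤ hub j + 1)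
    (htime : H + (k * k + 1) < height hub (c none)) (hk : 0 < k) :
    ZombiesWin Γ c r := by
  induction H generalizing c r with
  | zero =>
    refine zombiesWin_of_pack_in_core hc (fun i => Nat.le_zero.1 (hH i)) hr hrc hhub ?_ hk
    have := chasePotential_le (fun i => shadow (c (some i))) (shadow r)
    rw [Fintype.card_fin] at this
    omega
  | succ H ih =>
    have hdown := height_down (hub := hub) (hc none)
    by_cases hs : ∃ i, shadow (c (some i)) = shadow r ∧ height hub (c (some i)) ≤ height hub r
    · obtain ⟨i, hs, hi⟩ := hs
      exact zombiesWin_of_shadow_eq (hc (some i)) (hc none) hr hs hi hrc hhub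
    have advance (i : Fin k) : ∃ w, (Γ).Adj (c (some i)) w ∧
        (Γ).dist w r < (Γ).dist (c (some i)) r ∧ height hub w ≤ H ∧ depth w = 0 := by
      have hi := hH i
      by_cases hri : height hub r < height hub (c (some i))
      · have := height_down (hub := hub) (hc (some i))
        exact ⟨down hub (c (some i)), adj_down (by unfold elev; omega), dist_down_lt hr (.inr hri),
          by omega, by rw [depth_down, hc]⟩
      · have hsi : shadow (c (some i)) ≠ shadow r := fun h => hs ⟨i, h, by omega⟩
        have hi₀ : height hub (c (some i)) = 0 := by
          by_contra hne
          exact hsi ((shadow_eq_zero (hub := hub) (by omega)).trans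
            (shadow_eq_zero (hub := hub) (by omega)).symm)
        obtain ⟨w, hadj, hlt, hw, hwd⟩ := exists_adj_core_dist_lt (hc (some i)) hr hi₀ hsi
        exact ⟨w, hadj, hlt, hw.trans_le (Nat.zero_le H), hwd⟩
    choose u hadj hlt hu hud using advance
    refine zombiesWin_of_guard (hc none) hr (by omega) hrc hhub (fun i => ⟨hadj i, hlt i⟩)
      fun _ r' _ hr'd hr'c => ih ?_ hu hr'd hr'c (fun j => ?_) ?_
    · exact Option.forall.2 ⟨by simp only [Option.elim_none, depth_down, hc], hud⟩
    · have := hhub j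
      simp only [Option.elim_none]
      omega
    · simp only [Option.elim_none]
      omega

end Pack

section TwoHubs

variable {N F : Type*}

/-- The hubs of two families of gadgets. The gadgets indexed by `N` hang at height `k * k + 4`,
which leaves a pack of `k` zombies enough time to win below a guard of that height; the gadgets
indexed by `F` hang at the top of the spine, so high that a zombie walking down from there arrives
at height `k * k + 4` when one from a nearer gadget arrives at height `1`. -/
def twoHubs (k : ℕ) : N ⊕ F → Fin (2 * (k * k) + 7) :=
  Sum.elim (fun _ => ⟨k * k + 3, by omega⟩) (fun _ => Fin.last _)

/-- The initial position of two zombies in each gadget. -/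
def opening : J × Bool → GadgetVertex k R J
  | (j, false) => inner j 0
  | (j, true) => outer j 2

theorem depth_opening_le (p : J × Bool) : depth (opening (k := k) (R := R) p) ≤ 2 := by
  obtain ⟨j, _ | _⟩ := p <;> simp [opening]

theorem le_twoHubs (j : N ⊕ F) : k * k + 4 ≤ (twoHubs k j : ℕ) + 1 := by
  cases j
  · exact le_rfl
  · simp only [twoHubs, Sum.elim_inr, Fin.val_last]
    omega

theorem zombiesWin_opening_of_gadget [Nontrivial N] [Nontrivial F]
    {r : GadgetVertex k (2 * (k * k) + 7) (N ⊕ F)} {j : N ⊕ F}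
    (hr : (∃ t, r = inner j t) ∨ ∃ t, r = outer j t) :
    ZombiesWin (gadgetGraph k (twoHubs k)) opening r := by
  obtain ⟨j', hj, hhub⟩ : ∃ j', j' ≠ j ∧ twoHubs k j' = twoHubs k j := by
    cases j with
    | inl n => exact (exists_ne n).elim fun n' h => ⟨.inl n', Sum.inl_injective.ne h, rfl⟩
    | inr f => exact (exists_ne f).elim fun f' h => ⟨.inr f', Sum.inr_injective.ne h, rfl⟩
  refine ZombiesWin.of_comp connected_gadgetGraph (f := ![(j, false), (j, true), (j', false)])
    ?_ ?_
  · intro a b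
    fin_cases a <;> fin_cases b <;> simp [hj, hj.symm]
  · convert zombiesWin_gadget hj hhub hr using 1
    exact funext (by simp [Fin.forall_fin_succ, opening])

theorem zombiesWin_opening_of_le_height [Nonempty N] [Nonempty F]
    {r : GadgetVertex k (2 * (k * k) + 7) (N ⊕ F)} (hr : depth r = 0)
    (hle : k * k + 4 ≤ height (twoHubs k) r) :
    ZombiesWin (gadgetGraph k (twoHubs k)) opening r := by
  obtain ⟨n⟩ := ‹Nonempty N›
  obtain ⟨f⟩ := ‹Nonempty F›
  refine ZombiesWin.of_comp connected_gadgetGraph (f := ![(.inl n, false), (.inr f, false)])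
    (by simp [Function.Injective, Fin.forall_fin_two]) ?_
  have hmax : height (twoHubs k) r ≤ 2 * (k * k) + 7 := height_le
  refine .move_or_capture (c' := ![spine (twoHubs k (.inl n)), spine (twoHubs k (.inr f))])
    (Fin.forall_fin_two.2 ⟨⟨rfl, dist_down_lt (v := inner _ 0) hr (.inl Nat.one_pos)⟩,
      rfl, dist_down_lt (v := inner _ 0) hr (.inl Nat.one_pos)⟩) fun hne r' hr' => ?_
  have hnear : height (twoHubs k) r ≠ k * k + 4 := fun h => hne 0 (eq_spine hr h).symm
  have hfar : height (twoHubs k) r ≠ 2 * (k * k) + 7 := fun h => hne 1 (eq_spine hr h).symm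
  have hup := height_le_of_lazyAdj (hub := twoHubs k) hr'
  have hlow := height_le_of_lazyAdj (hub := twoHubs k) hr'.symm
  refine zombiesWin_between rfl rfl (depth_eq_zero_of_lazyAdj hr' hr ?_) rfl
    (shadow_eq_zero_of_lazyAdj (hub := twoHubs k) hr' (by omega)) ?_ ?_ ?_
  · exact Sum.forall.2 ⟨fun _ => hnear, fun _ => hfar⟩
  · change k * k + 4 ≤ _
    omega
  · change _ ≤ 2 * (k * k) + 7
    omega
  · exact Sum.forall.2 ⟨fun _ => .inl le_rfl, fun _ => .inr le_rfl⟩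

theorem zombiesWin_opening_of_height_lt [Fintype N] [Nonempty N] [Nonempty F]
    {r : GadgetVertex k (2 * (k * k) + 7) (N ⊕ F)} (hr : depth r = 0)
    (hlt : height (twoHubs k) r < k * k + 4) (hk : 0 < k) (hkN : k ≤ 2 * Fintype.card N) :
    ZombiesWin (gadgetGraph k (twoHubs k)) opening r := by
  obtain ⟨n⟩ := ‹Nonempty N›
  obtain ⟨f⟩ := ‹Nonempty F›
  obtain ⟨pack⟩ : Nonempty (Fin k ↪ N × Bool) :=
    Function.Embedding.nonempty_of_card_le (by simpa [mul_comm] using hkN)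
  refine zombiesWin_of_iterate_down (b := (.inl n, false)) le_rfl le_twoHubs ?_ hr hlt
    (k * k + 4) (Nat.lt_succ_self _) fun r' hr' hr'lt => ?_
  · rintro ⟨j, _ | _⟩
    · exact Nat.succ_le_succ (le_twoHubs j)
    · exact (Nat.succ_le_succ (le_twoHubs j)).trans (Nat.le_succ _)
  have hdepth (p : (N ⊕ F) × Bool) :
      depth (opening (k := k) (R := 2 * (k * k) + 7) p) ≤ k * k + 4 :=
    (depth_opening_le p).trans (by omega)
  let team : Option (Fin k) → (N ⊕ F) × Bool
    | none => (.inr f, false)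
    | some i => (.inl (pack i).1, (pack i).2)
  have hteam : team.Injective := by
    refine Option.injective_iff.2 ⟨fun i i' h => pack.injective ?_, ?_⟩
    · exact Prod.ext (Sum.inl_injective (Prod.mk.inj h).1) (Prod.mk.inj h).2
    · rintro ⟨i, h⟩
      cases congrArg Prod.fst h
  have hguard : height (twoHubs k) (((down (twoHubs k))^[k * k + 4] ∘ opening ∘ team) none) =
      k * k + 4 := (height_iterate_down (hdepth _)).trans (by
    change 2 * (k * k) + 7 + 1 - (k * k + 4) = k * k + 4
    omega)
  refine ZombiesWin.of_comp connected_gadgetGraph hteam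
    (zombiesWin_of_pack (c := (down (twoHubs k))^[k * k + 4] ∘ opening ∘ team) 2
      (fun o => ?_) (fun i => ?_) hr' ?_ (fun j => hguard.trans_le (le_twoHubs j)) ?_ hk)
  · exact (depth_iterate_down _).trans (Nat.sub_eq_zero_of_le (hdepth (team o)))
  · refine (height_iterate_down (hdepth _)).trans_le (Nat.sub_le_iff_le_add'.2 ?_)
    cases h : (pack i).2 <;> simp only [team, h]
    · exact Nat.le_succ _
    · exact le_rfl
  · change _ < k * k + 5 - (k * k + 4) at hr'lt
    omega
  · omega

theorem zombiesWinWith_of_twoHubs [Fintype N] [Fintype F] [Nontrivial N] [Nontrivial F]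
    (hk : 0 < k) (hkN : k ≤ 2 * Fintype.card N) :
    ZombiesWinWith (gadgetGraph k (twoHubs (N := N) (F := F) k)) (2 * Fintype.card (N ⊕ F)) := by
  have hwin (r : GadgetVertex k _ (N ⊕ F)) :
      ZombiesWin (gadgetGraph k (twoHubs k)) opening r := by
    by_cases hr : depth r = 0
    · obtain hlt | hle := lt_or_ge (height (twoHubs k) r) (k * k + 4)
      · exact zombiesWin_opening_of_height_lt hr hlt hk hkN
      · exact zombiesWin_opening_of_le_height hr hle
    · cases r with
      | inner j t => exact zombiesWin_opening_of_gadget (.inl ⟨t, rfl⟩)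
      | outer j t => exact zombiesWin_opening_of_gadget (.inr ⟨t, rfl⟩)
      | _ => exact absurd rfl hr
  have := zombiesWinWith_card connected_gadgetGraph hwin
  rwa [Fintype.card_prod, Fintype.card_bool, mul_comm _ 2] at this

end TwoHubs

end GadgetVertex

/-! ### Realizing ratios -/

theorem copNumber_eq {V : Type*} {G : SimpleGraph V} {k : ℕ} (h : CopsWinWith G k)
    (hlt : ∀ n < k, ¬ CopsWinWith G n) : copNumber G = k :=
  IsLeast.csInf_eq ⟨h, fun _ hn => not_lt.1 fun hnk => hlt _ hnk hn⟩

theorem zombieNumber_eq {V : Type*} {G : SimpleGraph V} {k : ℕ} (h : ZombiesWinWith G k)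
    (hlt : ∀ n < k, ¬ ZombiesWinWith G n) : zombieNumber G = k :=
  IsLeast.csInf_eq ⟨h, fun _ hn => not_lt.1 fun hnk => hlt _ hnk hn⟩

theorem evasionInvariant_of_isEmpty {V ι : Type*} [IsEmpty ι] (G : SimpleGraph V)
    (step : (ι → V) → V → (ι → V) → Prop) : EvasionInvariant G step fun _ _ => True where
  not_caught _ := isEmptyElim
  not_captured _ _ := isEmptyElim
  reply {_ r _} _ _ := ⟨r, .inl rfl, trivial⟩

section OneVertex

variable {V : Type*} [Unique V] (G : SimpleGraph V)

theorem copNumber_of_unique : copNumber G = 1 := by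
  refine copNumber_eq
    (copsWinWith (c := fun _ => default) fun _ => .caught 0 (Subsingleton.elim ..))
    fun n hn => ?_
  obtain rfl := Nat.lt_one_iff.1 hn
  exact (evasionInvariant_of_isEmpty G _).not_copsWinWith fun _ => ⟨default, trivial⟩

theorem zombieNumber_of_unique : zombieNumber G = 1 := by
  refine zombieNumber_eq
    ⟨fun _ => default, fun s => PursuersWin.catchFrom (step := ZombieStep G)
      (.caught 0 (Subsingleton.elim _ s))⟩
    fun n hn => ?_
  obtain rfl := Nat.lt_one_iff.1 hn
  exact (evasionInvariant_of_isEmpty G _).not_zombiesWinWith fun _ => ⟨default, trivial⟩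

end OneVertex

open GadgetVertex in
theorem exists_graph_copNumber_zombieNumber {k g : ℕ} (hk : 5 ≤ k) (hg : k + 4 ≤ 2 * g) :
    ∃ (V : Type) (G : SimpleGraph V), Finite V ∧ G.Connected ∧
      copNumber G = k ∧ zombieNumber G = 2 * g := by
  obtain ⟨m, rfl⟩ : ∃ m, g = m + 2 := ⟨g - 2, by omega⟩
  have : Nontrivial (Fin m) := Fin.nontrivial_iff_two_le.2 (by omega)
  have hcard : Fintype.card (Fin m ⊕ Fin 2) = m + 2 := by simp
  rw [← hcard]
  exact ⟨_, gadgetGraph k (twoHubs k), inferInstance, connected_gadgetGraph,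
    copNumber_eq (GadgetVertex.copsWinWith hk) fun _ => GadgetVertex.not_copsWinWith,
    zombieNumber_eq (zombiesWinWith_of_twoHubs (by omega) (by simp; omega))
      fun _ => GadgetVertex.not_zombiesWinWith⟩

/-- For every rational number `q ≥ 1` there is a finite connected simple graph `G` with
`z(G) / c(G) = q`, i.e. `z(G) = q * c(G)`. -/
theorem exists_graph_with_zombie_cop_ratio (q : ℚ) (hq : 1 ≤ q) :
    ∃ (V : Type) (G : SimpleGraph V), Finite V ∧ G.Connected ∧
      (zombieNumber G : ℚ) = q * (copNumber G : ℚ) := by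
  obtain rfl | hlt := hq.eq_or_lt
  · refine ⟨Unit, ⊥, inferInstance, .of_subsingleton, ?_⟩
    rw [zombieNumber_of_unique, copNumber_of_unique, one_mul]
  · lift q to ℚ≥0 using zero_le_one.trans hq
    have hden : q.den < q.num := by
      simpa [NNRat.lt_def] using NNRat.cast_lt.1 (NNRat.cast_one.trans_lt hlt)
    obtain ⟨V, G, hV, hG, hc, hz⟩ := exists_graph_copNumber_zombieNumber
      (k := 6 * q.den) (g := 3 * q.num) (by have := q.den_pos; omega) (by omega)
    refine ⟨V, G, hV, hG, ?_⟩
    rw [hz, hc]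
    have hnum : (q.num : ℚ) = q * q.den := mod_cast q.mul_den_eq_num.symm
    push_cast
    rw [hnum]
    ring
end

section
/- For every n ≥ 1, ⌈2n/3⌉ zombies have a winning strategy on the n-dimensional hypercube Q_n; that is, z(Q_n) ≤ ⌈2n/3⌉. -/
open SimpleGraph

/-!
Give every coordinate a guardian among the zombies, and let no zombie correct a coordinate it
guards. If the survivor stays still, or flips a coordinate that some zombie has wrong, the total
distance to the survivor drops. Otherwise all distances are unchanged and the flipped coordinate has
become wrong for its guardian; it stays so until the total distance drops. Hence the survivor is
caught, provided that a zombie at distance `d ≥ 2` always guards fewer than `d` coordinates: one if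
`d` is even, two if `d` is odd. In each round all distances change by the same parity, so zombies
started at distances of alternating parity keep them, and each pair of zombies can guard three
coordinates.
-/

section PositionalStrategy

variable {V : Type*} {k : ℕ}

theorem getLast?_histUpTo_succ (c : ℕ → Fin k → V) (r : ℕ → V) (n : ℕ) :
    (histUpTo c r (n + 1)).getLast? = some (c n, r n) := by
  simp [histUpTo, List.range_succ]

theorem zombiesCatchFrom_of_wellFoundedLT {G : SimpleGraph V} {α : Type*} [LT α]
    [WellFoundedLT α] (Good : (Fin k → V) → V → Prop) (rank : (Fin k → V) → V → α)
    (progress : ∀ c s, Good c s → (∀ i, c i ≠ s) → ∃ c' : Fin k → V,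
      (∀ i, G.Adj (c i) (c' i) ∧ G.dist (c' i) s < G.dist (c i) s) ∧
      ((∃ i, c' i = s) ∨ ∀ s', s' = s ∨ G.Adj s s' → Good c' s' ∧ rank c' s' < rank c s))
    {zpos : Fin k → V} {spos : V} (hgood : Good zpos spos) : ZombiesCatchFrom G zpos spos := by
  choose! move legal catch_or_good using progress
  refine ⟨fun H ↦ let p := H.getLast?.getD (zpos, spos); move p.1 p.2, ?_⟩
  rintro c r rfl rfl hfollow hr
  have hmove (t : ℕ) : c (t + 1) = move (c t) (r t) := by
    simp only [hfollow t, getLast?_histUpTo_succ, Option.getD_some]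
  suffices catch_from : ∀ t, Good (c t) (r t) → (∀ m < t, ZombieStepLegal G c r m) →
      ∃ n, ((∃ i, c n i = r n) ∧ ∀ m < n, ZombieStepLegal G c r m) ∨
        ((∃ i, c (n + 1) i = r n) ∧ ∀ m ≤ n, ZombieStepLegal G c r m) from
    catch_from 0 hgood fun m hm ↦ absurd hm m.not_lt_zero
  intro t hgood_t hlegal
  induction hrank : rank (c t) (r t) using WellFoundedLT.induction generalizing t with
  | ind a ih =>
    by_cases hcaught : ∃ i, c t i = r t
    · exact ⟨t, .inl ⟨hcaught, hlegal⟩⟩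
    push Not at hcaught
    have hlegal_t : ZombieStepLegal G c r t := by
      intro i
      rw [hmove t]
      exact legal _ _ hgood_t hcaught i
    have hlegal' : ∀ m ≤ t, ZombieStepLegal G c r m := fun m hm ↦
      hm.lt_or_eq.elim (hlegal m) fun h ↦ h ▸ hlegal_t
    have hnext := catch_or_good _ _ hgood_t hcaught
    rw [← hmove t] at hnext
    rcases hnext with hcatch | hgood'
    · exact ⟨t, .inr ⟨hcatch, hlegal'⟩⟩
    · obtain ⟨hgood_succ, hlt⟩ := hgood' _ (hr t)
      exact ih _ (hrank ▸ hlt) (t + 1) hgood_succ (fun m hm ↦ hlegal' m (Nat.le_of_lt_succ hm)) rfl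

end PositionalStrategy

section FlipCoord

variable {ι : Type*} [DecidableEq ι]

/-- The neighbour of `x` across dimension `j` of the cube `ι → Bool`: coordinate `j` is negated. -/
def flipCoord (x : ι → Bool) (j : ι) : ι → Bool :=
  Function.update x j (!x j)

theorem flipCoord_self (x : ι → Bool) (j : ι) : flipCoord x j j = !x j :=
  Function.update_self ..

theorem flipCoord_of_ne (x : ι → Bool) {i j : ι} (h : i ≠ j) : flipCoord x j i = x i :=
  Function.update_of_ne h ..

theorem flipCoord_flipCoord (x : ι → Bool) (j : ι) : flipCoord (flipCoord x j) j = x := by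
  simp [flipCoord]

variable [Fintype ι]

theorem hammingDist_flipCoord_right_of_eq {x y : ι → Bool} {j : ι} (h : x j = y j) :
    hammingDist x (flipCoord y j) = hammingDist x y + 1 := by
  have hinsert : ({i | x i ≠ flipCoord y j i} : Finset ι) =
      insert j ({i | x i ≠ y i} : Finset ι) := by
    ext i
    by_cases hi : i = j
    · subst hi
      simp [flipCoord_self, h]
    · simp [flipCoord_of_ne _ hi, hi]
  rw [hammingDist, hinsert, Finset.card_insert_of_notMem (by simp [h]), hammingDist]

theorem hammingDist_flipCoord_right_of_ne {x y : ι → Bool} {j : ι} (h : x j ≠ y j) :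
    hammingDist x (flipCoord y j) + 1 = hammingDist x y := by
  have hagree : x j = flipCoord y j j := by
    rw [flipCoord_self]
    exact Bool.eq_not.2 h
  rw [← hammingDist_flipCoord_right_of_eq hagree, flipCoord_flipCoord]

theorem hammingDist_flipCoord_left_of_ne {x y : ι → Bool} {j : ι} (h : x j ≠ y j) :
    hammingDist (flipCoord x j) y + 1 = hammingDist x y := by
  rw [hammingDist_comm, hammingDist_flipCoord_right_of_ne h.symm, hammingDist_comm]

theorem hammingDist_flipCoord_mod_two (x y : ι → Bool) (j : ι) :
    hammingDist x (flipCoord y j) % 2 = (hammingDist x y + 1) % 2 := by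
  by_cases h : x j = y j
  · rw [hammingDist_flipCoord_right_of_eq h]
  · have := hammingDist_flipCoord_right_of_ne h
    omega

end FlipCoord

section HypercubeDist

variable {n : ℕ}

theorem hypercube_adj_iff {x y : Fin n → Bool} :
    (hypercube n).Adj x y ↔ ∃ j, y = flipCoord x j := by
  rw [hypercube, SimpleGraph.fromRel_adj]
  constructor
  · rintro ⟨-, ⟨j, hne, heq⟩ | ⟨j, hne, heq⟩⟩
    · exact ⟨j, Function.eq_update_iff.2 ⟨Bool.eq_not.2 hne.symm, fun i hi ↦ (heq i hi).symm⟩⟩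
    · exact ⟨j, Function.eq_update_iff.2 ⟨Bool.eq_not.2 hne, heq⟩⟩
  · rintro ⟨j, rfl⟩
    have hne : x j ≠ flipCoord x j j := by simp [flipCoord_self]
    exact ⟨fun h ↦ hne (congrFun h j), .inl ⟨j, hne, fun i hi ↦ (flipCoord_of_ne x hi).symm⟩⟩

theorem hypercube_adj_flipCoord (x : Fin n → Bool) (j : Fin n) :
    (hypercube n).Adj x (flipCoord x j) :=
  hypercube_adj_iff.2 ⟨j, rfl⟩

theorem hammingDist_le_length {x y : Fin n → Bool} (w : (hypercube n).Walk x y) :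
    hammingDist x y ≤ w.length := by
  induction w with
  | nil => simp
  | @cons x _ y hadj w ih =>
    obtain ⟨j, rfl⟩ := hypercube_adj_iff.1 hadj
    calc hammingDist x y
        ≤ hammingDist x (flipCoord x j) + hammingDist (flipCoord x j) y := hammingDist_triangle ..
      _ = 1 + hammingDist (flipCoord x j) y := by
          rw [hammingDist_flipCoord_right_of_eq rfl, hammingDist_self]
      _ ≤ (Walk.cons hadj w).length := by rw [Walk.length_cons]; omega

theorem exists_walk_length_eq_hammingDist (x y : Fin n → Bool) :
    ∃ w : (hypercube n).Walk x y, w.length = hammingDist x y := by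
  induction hd : hammingDist x y generalizing x with
  | zero =>
    obtain rfl := eq_of_hammingDist_eq_zero hd
    exact ⟨.nil, rfl⟩
  | succ d ih =>
    obtain ⟨j, hj⟩ := Function.ne_iff.1 (hammingDist_pos.1 (hd ▸ d.succ_pos : 0 < hammingDist x y))
    have hcloser := hammingDist_flipCoord_left_of_ne hj
    obtain ⟨w, hw⟩ := ih (flipCoord x j) (by omega)
    exact ⟨.cons (hypercube_adj_flipCoord x j) w, by rw [Walk.length_cons, hw]⟩

theorem dist_hypercube (x y : Fin n → Bool) : (hypercube n).dist x y = hammingDist x y := by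
  obtain ⟨w, hw⟩ := exists_walk_length_eq_hammingDist x y
  obtain ⟨geodesic, hgeodesic⟩ := w.reachable.exists_walk_length_eq_dist
  exact le_antisymm (hw ▸ dist_le w) (hgeodesic ▸ hammingDist_le_length geodesic)

theorem hypercube_dist_flipCoord_lt {x y : Fin n → Bool} {j : Fin n} (h : x j ≠ y j) :
    (hypercube n).dist (flipCoord x j) y < (hypercube n).dist x y := by
  rw [dist_hypercube, dist_hypercube, ← hammingDist_flipCoord_left_of_ne h]
  exact Nat.lt_succ_self _

end HypercubeDist

section Guarding

variable {ι κ : Type*} [Fintype ι]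

/-- The sum of the Hamming distances of the zombies `c` from the survivor `s`. -/
def totalDist [Fintype κ] (c : κ → ι → Bool) (s : ι → Bool) : ℕ :=
  ∑ i, hammingDist (c i) s

/-- The coordinates that are not guarded, where `j` counts as guarded while its guardian `g j` has
it wrong: flipping it then brings the survivor closer to that zombie. -/
def unguarded (g : ι → κ) (c : κ → ι → Bool) (s : ι → Bool) : Finset ι :=
  {j | c (g j) j = s j}

theorem mem_unguarded {g : ι → κ} {c : κ → ι → Bool} {s : ι → Bool} {j : ι} :
    j ∈ unguarded g c s ↔ c (g j) j = s j := by
  simp [unguarded]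

theorem exists_ne_and_guardian_ne [DecidableEq κ] {g : ι → κ} {i : κ} {x s : ι → Bool}
    (h : Finset.card {j | g j = i} < hammingDist x s) : ∃ j, x j ≠ s j ∧ g j ≠ i := by
  obtain ⟨j, hne, hguard⟩ := Finset.exists_mem_notMem_of_card_lt_card h
  exact ⟨j, by simpa using hne, by simpa using hguard⟩

variable [DecidableEq ι] {g : ι → κ} {c : κ → ι → Bool} {m : κ → ι} {s : ι → Bool}

theorem unguarded_flipCoord_ssubset (hguard : ∀ i, g (m i) ≠ i) {j : ι}
    (hagree : flipCoord (c (g j)) (m (g j)) j = s j) :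
    unguarded g (fun i ↦ flipCoord (c i) (m i)) (flipCoord s j) ⊂ unguarded g c s := by
  have hkeep (l : ι) : flipCoord (c (g l)) (m (g l)) l = c (g l) l :=
    flipCoord_of_ne _ fun h ↦ hguard (g l) (congrArg g h.symm)
  have hnot_mem : j ∉ unguarded g (fun i ↦ flipCoord (c i) (m i)) (flipCoord s j) := by
    simp [mem_unguarded, hagree, flipCoord_self]
  refine (Finset.ssubset_iff_of_subset fun l hl ↦ ?_).2
    ⟨j, mem_unguarded.2 ((hkeep j).symm.trans hagree), hnot_mem⟩
  have hlj : l ≠ j := fun h ↦ hnot_mem (h ▸ hl)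
  rw [mem_unguarded, hkeep, flipCoord_of_ne _ hlj] at hl
  exact mem_unguarded.2 hl

variable [Fintype κ]

theorem totalDist_flipCoord_lt [Nonempty κ] (hne : ∀ i, c i (m i) ≠ s (m i)) :
    totalDist (fun i ↦ flipCoord (c i) (m i)) s < totalDist c s :=
  Finset.sum_lt_sum_of_nonempty Finset.univ_nonempty fun i _ ↦
    Nat.lt_of_succ_le (hammingDist_flipCoord_left_of_ne (hne i)).le

theorem totalDist_flipCoord_flipCoord_lt_or (hne : ∀ i, c i (m i) ≠ s (m i)) (j : ι) :
    totalDist (fun i ↦ flipCoord (c i) (m i)) (flipCoord s j) < totalDist c s ∨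
      ∀ i, flipCoord (c i) (m i) j = s j ∧
        hammingDist (flipCoord (c i) (m i)) (flipCoord s j) = hammingDist (c i) s := by
  have hcloser (i : κ) := hammingDist_flipCoord_left_of_ne (hne i)
  have hsame (i : κ) (h : flipCoord (c i) (m i) j = s j) :
      hammingDist (flipCoord (c i) (m i)) (flipCoord s j) = hammingDist (c i) s := by
    rw [hammingDist_flipCoord_right_of_eq h, hcloser i]
  have hdrop (i : κ) (h : flipCoord (c i) (m i) j ≠ s j) :
      hammingDist (flipCoord (c i) (m i)) (flipCoord s j) < hammingDist (c i) s := by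
    have := hammingDist_flipCoord_right_of_ne h
    have := hcloser i
    omega
  by_cases hagree : ∀ i, flipCoord (c i) (m i) j = s j
  · exact .inr fun i ↦ ⟨hagree i, hsame i (hagree i)⟩
  · push Not at hagree
    obtain ⟨i, hi⟩ := hagree
    refine .inl (Finset.sum_lt_sum (fun i _ ↦ ?_) ⟨i, Finset.mem_univ i, hdrop i hi⟩)
    exact (eq_or_ne _ _).elim (fun h ↦ (hsame i h).le) fun h ↦ (hdrop i h).le

end Guarding

section Parity

variable {n k : ℕ}

/-- The zombie in charge of coordinate `j` when each zombie `i` is at distance of the parity of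
`p + i`: zombies `2q` and `2q + 1` share the coordinates `3q`, `3q + 1` and `3q + 2`, the middle one
going to the zombie at odd distance. -/
def guardian (hnk : 2 * n ≤ 3 * k) (p : ℕ) (j : Fin n) : Fin k :=
  ⟨(2 * j + (p + 1) % 2) / 3, by omega⟩

theorem card_guardian_eq_le (hnk : 2 * n ≤ 3 * k) (p : ℕ) (i : Fin k) :
    Finset.card {j | guardian hnk p j = i} ≤ 1 + (p + i) % 2 := by
  calc Finset.card {j | guardian hnk p j = i}
      ≤ (Finset.Ico ((3 * i + 1 - (p + 1) % 2) / 2) ((3 * i + 4 - (p + 1) % 2) / 2)).card := by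
        refine Finset.card_le_card_of_injOn Fin.val (fun j hj ↦ ?_) Fin.val_injective.injOn
        have hval : (2 * (j : ℕ) + (p + 1) % 2) / 3 = i := by simpa [guardian, Fin.ext_iff] using hj
        rw [Finset.coe_Ico, Set.mem_Ico]
        omega
    _ ≤ 1 + (p + i) % 2 := by
        rw [Nat.card_Ico]
        omega

variable [NeZero k]

/-- The position invariant of the zombies' strategy: the distances of consecutive zombies to the
survivor have opposite parities. -/
def ParityAlternating {ι : Type*} [Fintype ι] (c : Fin k → ι → Bool) (s : ι → Bool) : Prop :=
  ∀ i, hammingDist (c i) s % 2 = (hammingDist (c 0) s + i) % 2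

section Preservation

variable {ι : Type*} [Fintype ι] [DecidableEq ι] {c : Fin k → ι → Bool} {s : ι → Bool}

theorem ParityAlternating.flipCoord_right (h : ParityAlternating c s) (j : ι) :
    ParityAlternating c (flipCoord s j) := by
  intro i
  have := h i
  have := hammingDist_flipCoord_mod_two (c i) s j
  have := hammingDist_flipCoord_mod_two (c 0) s j
  omega

theorem ParityAlternating.flipCoord_left (h : ParityAlternating c s) (m : Fin k → ι) :
    ParityAlternating (fun i ↦ flipCoord (c i) (m i)) s := by
  intro i
  have := h i
  have := hammingDist_flipCoord_mod_two s (c i) (m i)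
  have := hammingDist_flipCoord_mod_two s (c 0) (m 0)
  simp only [hammingDist_comm s] at *
  omega

theorem parityAlternating_ite_even (x s : ι → Bool) (j : ι) :
    ParityAlternating (fun i : Fin k ↦ if Even (i : ℕ) then x else flipCoord x j) s := by
  intro i
  have hflip := hammingDist_flipCoord_mod_two s x j
  simp only [hammingDist_comm s] at hflip
  rcases Nat.even_or_odd i with hi | hi
  · simp [hi, Nat.add_mod, Nat.even_iff.1 hi]
  · simp [Nat.not_even_iff_odd.2 hi, hflip, Nat.add_mod, Nat.odd_iff.1 hi]

end Preservation

theorem card_guardian_eq_lt_hammingDist (hnk : 2 * n ≤ 3 * k) {c : Fin k → Fin n → Bool}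
    {s : Fin n → Bool} (hpar : ParityAlternating c s) {i : Fin k} (hi : 2 ≤ hammingDist (c i) s) :
    Finset.card {j | guardian hnk (hammingDist (c 0) s) j = i} < hammingDist (c i) s := by
  have := card_guardian_eq_le hnk (hammingDist (c 0) s) i
  have := hpar i
  omega

/-- The ranking of positions that decreases in every round without capture: the total distance
first, then the number of unguarded coordinates. -/
def guardRank (hnk : 2 * n ≤ 3 * k) (c : Fin k → Fin n → Bool) (s : Fin n → Bool) : ℕ ×ₗ ℕ :=
  toLex (totalDist c s, (unguarded (guardian hnk (hammingDist (c 0) s)) c s).card)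

theorem guardRank_flipCoord_lt (hnk : 2 * n ≤ 3 * k) {c : Fin k → Fin n → Bool} {m : Fin k → Fin n}
    {s s' : Fin n → Bool} (hne : ∀ i, c i (m i) ≠ s (m i))
    (hguard : ∀ i, guardian hnk (hammingDist (c 0) s) (m i) ≠ i)
    (hs : s' = s ∨ (hypercube n).Adj s s') :
    guardRank hnk (fun i ↦ flipCoord (c i) (m i)) s' < guardRank hnk c s := by
  rw [guardRank, guardRank, Prod.Lex.toLex_lt_toLex]
  rcases hs with rfl | hadj
  · exact .inl (totalDist_flipCoord_lt hne)
  obtain ⟨j, rfl⟩ := hypercube_adj_iff.1 hadj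
  refine (totalDist_flipCoord_flipCoord_lt_or hne j).imp_right fun hsame ↦ ?_
  refine ⟨show totalDist _ _ = totalDist c s from Finset.sum_congr rfl fun i _ ↦ (hsame i).2, ?_⟩
  simp only [(hsame 0).2]
  exact Finset.card_lt_card (unguarded_flipCoord_ssubset hguard (hsame _).1)

theorem ParityAlternating.exists_progress (hnk : 2 * n ≤ 3 * k) {c : Fin k → Fin n → Bool}
    {s : Fin n → Bool} (hpar : ParityAlternating c s) (huncaught : ∀ i, c i ≠ s) :
    ∃ c' : Fin k → Fin n → Bool,
      (∀ i, (hypercube n).Adj (c i) (c' i) ∧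
        (hypercube n).dist (c' i) s < (hypercube n).dist (c i) s) ∧
      ((∃ i, c' i = s) ∨ ∀ s', s' = s ∨ (hypercube n).Adj s s' →
        ParityAlternating c' s' ∧ guardRank hnk c' s' < guardRank hnk c s) := by
  have legal {m : Fin k → Fin n} (hne : ∀ i, c i (m i) ≠ s (m i)) (i : Fin k) :=
    And.intro (hypercube_adj_flipCoord (c i) (m i)) (hypercube_dist_flipCoord_lt (hne i))
  by_cases hclose : ∃ i, hammingDist (c i) s = 1
  · obtain ⟨i, hi⟩ := hclose
    choose m hne using fun i ↦ Function.ne_iff.1 (huncaught i)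
    have hcatch := hammingDist_flipCoord_left_of_ne (hne i)
    exact ⟨_, legal hne, .inl ⟨i, eq_of_hammingDist_eq_zero (by omega)⟩⟩
  · have hfar (i : Fin k) : 2 ≤ hammingDist (c i) s := by
      have := hammingDist_pos.2 (huncaught i)
      have := not_exists.1 hclose i
      omega
    choose m hne hguard using fun i ↦
      exists_ne_and_guardian_ne (card_guardian_eq_lt_hammingDist hnk hpar (hfar i))
    refine ⟨_, legal hne, .inr fun s' hs ↦ ⟨?_, guardRank_flipCoord_lt hnk hne hguard hs⟩⟩
    rcases hs with rfl | hadj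
    · exact hpar.flipCoord_left m
    · obtain ⟨j, rfl⟩ := hypercube_adj_iff.1 hadj
      exact (hpar.flipCoord_left m).flipCoord_right j

end Parity

theorem zombiesWinWith_hypercube {n k : ℕ} (hn : 1 ≤ n) (hnk : 2 * n ≤ 3 * k) :
    ZombiesWinWith (hypercube n) k := by
  have : NeZero k := ⟨by omega⟩
  let origin : Fin n → Bool := fun _ ↦ false
  refine ⟨fun i ↦ if Even (i : ℕ) then origin else flipCoord origin ⟨0, hn⟩, fun s ↦ ?_⟩
  exact zombiesCatchFrom_of_wellFoundedLT ParityAlternating (guardRank hnk)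
    (fun _ _ ↦ ParityAlternating.exists_progress hnk) (parityAlternating_ite_even origin s _)

/-- For every `n ≥ 1`, `⌈2n/3⌉` zombies have a winning strategy on the `n`-dimensional
hypercube `Q_n`; that is, `z(Q_n) ≤ ⌈2n/3⌉`. -/
theorem zombies_win_hypercube (n : ℕ) (hn : 1 ≤ n) :
    ZombiesWinWith (hypercube n) ((2 * n + 2) / 3) ∧
      zombieNumber (hypercube n) ≤ (2 * n + 2) / 3 := by
  have hwin : ZombiesWinWith (hypercube n) ((2 * n + 2) / 3) :=
    zombiesWinWith_hypercube hn (by omega)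
  exact ⟨hwin, Nat.sInf_le hwin⟩
end
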